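/- arXiv:1908.05456 — 2 statements merged into one kernel-verified Lean document; each statement's English description precedes it below -/
import Mathlib

section
/- Let q be a prime power with q ≥ 4 and q ≠ 9. Set G = C_2 ∗ C_3 and H = PSL(2,q). Then H is a homomorphic image of G (there is a surjective group homomorphism G → H), and there exists a generating pair (h1,h2) of H such that for every group homomorphism θ : G → H and every generating pair (g1,g2) of G one has (θ(g1), θ(g2)) ≠ (h1,h2). -/
/-- `SL(2,F)` -/
abbrev SL2 (F : Type) [Field F] : Type := Matrix.SpecialLinearGroup (Fin 2) F

/-- `PSL(2,F)`, the quotient of `SL(2,F)` by its centre `{±I}`. -/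
abbrev PSL2 (F : Type) [Field F] : Type := SL2 F ⧸ Subgroup.center (SL2 F)

/-- The cyclic group of order `m`. -/
abbrev Cyc (m : ℕ) : Type := Multiplicative (ZMod m)

/-!
Let `A` and `B` have traces `0` and `1`, so that they define `C₂ ∗ C₃ → PSL(2, R)`. By
Cayley–Hamilton, every `X`, `Y` in `⟨A, B⟩` lie in the span of `1`, `A`, `B`, `AB` over `ℤ[tr(AB)]`,
and then `tr[X, Y] - 2 = p(tr(AB)) * (tr[A, B] - 2)` for an integer polynomial `p`. If `X`, `Y` come
from a generating pair of `C₂ ∗ C₃`, the roles can be exchanged, so a transcendental value of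
`tr(AB)` shows `p = ±1`. Choosing `A` and `B` in `SU(2)`, where traces have absolute value at most
`2`, excludes `p = -1`. Hence `tr[X, Y] = tr[A, B] = tr(AB) ^ 2 - 1` over every ring.

So a generating pair of `PSL(2, q)` with commutator trace `c ≠ 2` cannot lift if `c + 1` is not a
square. In characteristic two every element is a square, but there a pair with `c = -1` cannot lift
for `q > 2`, because `tr(AB) = 0` would place all traces in the prime field. Such pairs exist with
one member generating the diagonal torus: a subgroup containing the torus and a nontrivial upper
unitriangular element contains all of these, since every element of `F_q` is a difference of two
squares, and is then everything as soon as it is not upper triangular. For most `q` the surjection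
comes from the same criterion, applied to an involution and an element of order three whose product
generates the torus.
-/

open Matrix
open scoped MatrixGroups commutatorElement

section Trace
variable {R : Type*} [CommRing R]

lemma mul_self_eq_trace_smul_sub (A : SL(2, R)) : A.1 * A.1 = A.1.trace • A.1 - 1 := by
  have h := A.2
  rw [det_fin_two] at h
  ext i j
  fin_cases i <;> fin_cases j <;> simp [mul_apply, trace_fin_two] <;> grind

lemma coe_inv_eq_trace_smul_one_sub (A : SL(2, R)) : (A⁻¹).1 = A.1.trace • 1 - A.1 := by
  ext i j
  fin_cases i <;> fin_cases j <;> simp [Matrix.SpecialLinearGroup.SL2_inv_expl, trace_fin_two]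

lemma mul_swap_eq (A B : Matrix (Fin 2) (Fin 2) R) :
    B * A = ((A * B).trace - A.trace * B.trace) • 1 + B.trace • A + A.trace • B - A * B := by
  ext i j
  fin_cases i <;> fin_cases j <;> simp [mul_apply, trace_fin_two] <;> ring

/-- The `S`-module spanned by `1`, `A`, `B`, `AB`; if `S` contains the traces of `A`, `B` and `AB`,
it contains all words in `A` and `B`. -/
def wordSpan (S : Subring R) (A B : SL(2, R)) : Submodule S (Matrix (Fin 2) (Fin 2) R) :=
  Submodule.span S (Set.range ![1, A.1, B.1, A.1 * B.1])

variable {S : Subring R} {A B : SL(2, R)}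

lemma wordSpan_le {P : Submodule S (Matrix (Fin 2) (Fin 2) R)} (h1 : 1 ∈ P) (hA : A.1 ∈ P)
    (hB : B.1 ∈ P) (hAB : A.1 * B.1 ∈ P) : wordSpan S A B ≤ P := by
  rw [wordSpan, Submodule.span_le, Set.range_subset_iff]
  intro i
  fin_cases i <;> assumption

lemma one_mem_wordSpan : 1 ∈ wordSpan S A B := Submodule.subset_span ⟨0, rfl⟩

lemma left_mem_wordSpan : A.1 ∈ wordSpan S A B := Submodule.subset_span ⟨1, rfl⟩

lemma right_mem_wordSpan : B.1 ∈ wordSpan S A B := Submodule.subset_span ⟨2, rfl⟩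

lemma mul_mem_wordSpan : A.1 * B.1 ∈ wordSpan S A B := Submodule.subset_span ⟨3, rfl⟩

lemma smul_mem_of_mem {P : Submodule S (Matrix (Fin 2) (Fin 2) R)} {r : R} (hr : r ∈ S)
    {M : Matrix (Fin 2) (Fin 2) R} (hM : M ∈ P) : r • M ∈ P :=
  P.smul_mem ⟨r, hr⟩ hM

lemma left_mul_mem_wordSpan (hA : A.1.trace ∈ S) {M : Matrix (Fin 2) (Fin 2) R}
    (hM : M ∈ wordSpan S A B) : A.1 * M ∈ wordSpan S A B := by
  suffices wordSpan S A B ≤ (wordSpan S A B).comap (LinearMap.mulLeft S A.1) from this hM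
  refine wordSpan_le ?_ ?_ ?_ ?_ <;>
    simp only [Submodule.mem_comap, LinearMap.mulLeft_apply, mul_one, ← mul_assoc,
      mul_self_eq_trace_smul_sub, sub_mul, smul_mul_assoc, one_mul]
  · exact left_mem_wordSpan
  · exact sub_mem (smul_mem_of_mem hA left_mem_wordSpan) one_mem_wordSpan
  · exact mul_mem_wordSpan
  · exact sub_mem (smul_mem_of_mem hA mul_mem_wordSpan) right_mem_wordSpan

lemma right_mul_mem_wordSpan (hA : A.1.trace ∈ S) (hB : B.1.trace ∈ S)
    (hAB : (A * B).1.trace ∈ S) {M : Matrix (Fin 2) (Fin 2) R}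
    (hM : M ∈ wordSpan S A B) : B.1 * M ∈ wordSpan S A B := by
  have hBA : B.1 * A.1 ∈ wordSpan S A B := by
    rw [mul_swap_eq]
    exact sub_mem (add_mem (add_mem
      (smul_mem_of_mem (sub_mem hAB (mul_mem hA hB)) one_mem_wordSpan)
      (smul_mem_of_mem hB left_mem_wordSpan)) (smul_mem_of_mem hA right_mem_wordSpan))
      mul_mem_wordSpan
  have hBB : B.1 * B.1 ∈ wordSpan S A B := by
    rw [mul_self_eq_trace_smul_sub]
    exact sub_mem (smul_mem_of_mem hB right_mem_wordSpan) one_mem_wordSpan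
  have hBAB : B.1 * (A.1 * B.1) = (A * B).1.trace • B.1 - (A⁻¹).1 := by
    have hinv (M : Matrix (Fin 2) (Fin 2) R) : (A⁻¹).1 * (A.1 * M) = M := by
      rw [← mul_assoc, ← Matrix.SpecialLinearGroup.coe_mul, inv_mul_cancel,
        Matrix.SpecialLinearGroup.coe_one, one_mul]
    simpa only [Matrix.SpecialLinearGroup.coe_mul, mul_assoc, hinv, mul_sub, mul_smul_comm,
      mul_one] using congr_arg ((A⁻¹).1 * ·) (mul_self_eq_trace_smul_sub (A * B))
  suffices wordSpan S A B ≤ (wordSpan S A B).comap (LinearMap.mulLeft S B.1) from this hM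
  refine wordSpan_le ?_ hBA hBB ?_
  · simpa using right_mem_wordSpan
  · simp only [Submodule.mem_comap, LinearMap.mulLeft_apply, hBAB, coe_inv_eq_trace_smul_one_sub A]
    exact sub_mem (smul_mem_of_mem hAB right_mem_wordSpan)
      (sub_mem (smul_mem_of_mem hA one_mem_wordSpan) left_mem_wordSpan)

lemma coe_mem_wordSpan (hA : A.1.trace ∈ S) (hB : B.1.trace ∈ S) (hAB : (A * B).1.trace ∈ S)
    {X : SL(2, R)} (hX : X ∈ Subgroup.closure {A, B}) : X.1 ∈ wordSpan S A B := by
  have left {M} (hM : M ∈ wordSpan S A B) := left_mul_mem_wordSpan hA hM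
  have right {M} (hM : M ∈ wordSpan S A B) := right_mul_mem_wordSpan hA hB hAB hM
  induction hX using Subgroup.closure_induction_left with
  | one => exact one_mem_wordSpan
  | mul_left Z hZ Y _ hY =>
    obtain rfl | rfl := hZ
    exacts [left hY, right hY]
  | inv_mul_cancel Z hZ Y _ hY =>
    rw [Matrix.SpecialLinearGroup.coe_mul, coe_inv_eq_trace_smul_one_sub, sub_mul, smul_one_mul]
    obtain rfl | rfl := hZ
    exacts [sub_mem (smul_mem_of_mem hA hY) (left hY), sub_mem (smul_mem_of_mem hB hY) (right hY)]

theorem trace_mem_of_mem_closure (hA : A.1.trace ∈ S) (hB : B.1.trace ∈ S)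
    (hAB : (A * B).1.trace ∈ S) {X : SL(2, R)} (hX : X ∈ Subgroup.closure {A, B}) :
    X.1.trace ∈ S := by
  obtain ⟨p, hp⟩ := (Submodule.mem_span_range_iff_exists_fun S).1 (coe_mem_wordSpan hA hB hAB hX)
  have htr : X.1.trace =
      p 0 * 2 + p 1 * A.1.trace + p 2 * B.1.trace + p 3 * (A * B).1.trace := by
    simp [← hp, Fin.sum_univ_four, Subring.smul_def]
  rw [htr]
  have two_mem : (2 : R) ∈ S := ofNat_mem S 2
  exact add_mem (add_mem (add_mem (mul_mem (p 0).2 two_mem) (mul_mem (p 1).2 hA))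
    (mul_mem (p 2).2 hB)) (mul_mem (p 3).2 hAB)

/-- The trace of the commutator `[X, Y]`, the Nielsen invariant of the pair `(X, Y)`. -/
def commTrace (X Y : SL(2, R)) : R := (⁅X, Y⁆ : SL(2, R)).1.trace

lemma commTrace_sub_two (X Y : SL(2, R)) :
    commTrace X Y - 2 = -(X.1 * Y.1 - Y.1 * X.1).det := by
  have hC : (X.1 * Y.1 - Y.1 * X.1) = ((⁅X, Y⁆ : SL(2, R)).1 - 1) * (Y * X).1 := by
    have hmul : ⁅X, Y⁆ * (Y * X) = X * Y := by group
    rw [sub_mul, one_mul, ← Matrix.SpecialLinearGroup.coe_mul ⁅X, Y⁆, hmul,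
      Matrix.SpecialLinearGroup.coe_mul, Matrix.SpecialLinearGroup.coe_mul]
  have hdet := (⁅X, Y⁆ : SL(2, R)).2
  rw [det_fin_two] at hdet
  rw [hC, det_mul, (Y * X).2, commTrace, det_fin_two, trace_fin_two]
  simp
  linear_combination hdet

lemma commTrace_eq (X Y : SL(2, R)) :
    commTrace X Y = X.1.trace ^ 2 + Y.1.trace ^ 2 + (X * Y).1.trace ^ 2
      - X.1.trace * Y.1.trace * (X * Y).1.trace - 2 := by
  have hX := X.2
  have hY := Y.2
  rw [det_fin_two] at hX hY
  rw [sub_eq_iff_eq_add.1 (commTrace_sub_two X Y)]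
  simp [det_fin_two, trace_fin_two, mul_apply]
  grind

theorem exists_commTrace_sub_two_eq (hA : A.1.trace ∈ S) (hB : B.1.trace ∈ S)
    (hAB : (A * B).1.trace ∈ S) {X Y : SL(2, R)} (hX : X ∈ Subgroup.closure {A, B})
    (hY : Y ∈ Subgroup.closure {A, B}) :
    ∃ s ∈ S, commTrace X Y - 2 = s * (commTrace A B - 2) := by
  obtain ⟨p, hp⟩ := (Submodule.mem_span_range_iff_exists_fun S).1 (coe_mem_wordSpan hA hB hAB hX)
  obtain ⟨q, hq⟩ := (Submodule.mem_span_range_iff_exists_fun S).1 (coe_mem_wordSpan hA hB hAB hY)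
  set m₁ : S := p 1 * q 2 - p 2 * q 1 with hm₁
  set m₂ : S := p 1 * q 3 - p 3 * q 1 with hm₂
  set m₃ : S := p 2 * q 3 - p 3 * q 2 with hm₃
  have hcomm : X.1 * Y.1 - Y.1 * X.1 =
      (m₁ • 1 + m₂ • A.1 - m₃ • B.1.adjugate) * (A.1 * B.1 - B.1 * A.1) := by
    rw [← hp, ← hq]
    ext i j
    fin_cases i <;> fin_cases j <;>
      simp [hm₁, hm₂, hm₃, Fin.sum_univ_four, Subring.smul_def, mul_apply, adjugate_fin_two] <;>
      ring
  have hdet : (m₁ • 1 + m₂ • A.1 - m₃ • B.1.adjugate).det = m₁ ^ 2 + m₂ ^ 2 + m₃ ^ 2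
      + m₁ * m₂ * A.1.trace - m₁ * m₃ * B.1.trace - m₂ * m₃ * (A * B).1.trace := by
    have hA := A.2
    have hB := B.2
    simp only [det_fin_two] at hA hB
    simp [det_fin_two, adjugate_fin_two, trace_fin_two, mul_apply, Subring.smul_def]
    linear_combination m₂ ^ 2 * hA + m₃ ^ 2 * hB
  refine ⟨m₁ ^ 2 + m₂ ^ 2 + m₃ ^ 2
      + m₁ * m₂ * A.1.trace - m₁ * m₃ * B.1.trace - m₂ * m₃ * (A * B).1.trace, ?_, ?_⟩
  · lift A.1.trace to S using hA with a
    lift B.1.trace to S using hB with b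
    lift (A * B).1.trace to S using hAB with c
    exact SetLike.coe_mem (m₁ ^ 2 + m₂ ^ 2 + m₃ ^ 2 + m₁ * m₂ * a - m₁ * m₃ * b - m₂ * m₃ * c)
  · rw [commTrace_sub_two, commTrace_sub_two, hcomm, det_mul, hdet, mul_neg]

end Trace

section Lift
variable {G H K : Type*} [Group G] [Group H] [Group K]

lemma exists_mem_closure_map_eq {φ : G →* H} {π : K →* H} {g₁ g₂ : G} {k₁ k₂ : K}
    (hg : Subgroup.closure {g₁, g₂} = ⊤) (h₁ : π k₁ = φ g₁) (h₂ : π k₂ = φ g₂) (g : G) :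
    ∃ k ∈ Subgroup.closure {k₁, k₂}, π k = φ g := by
  have h : (Subgroup.closure {k₁, k₂}).map π = (Subgroup.closure {g₁, g₂}).map φ := by
    simp_rw [MonoidHom.map_closure, Set.image_pair, h₁, h₂]
  have hφ : φ g ∈ (Subgroup.closure {g₁, g₂}).map φ := ⟨g, by simp [hg], rfl⟩
  rwa [← h] at hφ

lemma commutatorElement_mul_center_left {z : G} (hz : z ∈ Subgroup.center G) (g h : G) :
    ⁅g * z, h⁆ = ⁅g, h⁆ := by
  have hzh : z * h * z⁻¹ = h := by rw [← Subgroup.mem_center_iff.1 hz h, mul_inv_cancel_right]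
  calc ⁅g * z, h⁆ = g * (z * h * z⁻¹) * g⁻¹ * h⁻¹ := by group
    _ = ⁅g, h⁆ := by rw [hzh, commutatorElement_def]

lemma commutatorElement_eq_of_mk_eq {g₁ g₂ h₁ h₂ : G}
    (hg : (g₁ : G ⧸ Subgroup.center G) = g₂) (hh : (h₁ : G ⧸ Subgroup.center G) = h₂) :
    ⁅g₁, h₁⁆ = ⁅g₂, h₂⁆ := by
  have left {a b c : G} (hab : (a : G ⧸ Subgroup.center G) = b) : ⁅a, c⁆ = ⁅b, c⁆ := by
    rw [← commutatorElement_mul_center_left (QuotientGroup.eq.1 hab) a c, mul_inv_cancel_left]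
  rw [left hg, ← commutatorElement_inv, left hh, commutatorElement_inv]

lemma closure_mk_pair_eq_top {N : Subgroup G} [N.Normal] {x y : G}
    (h : Subgroup.closure {x, y} = ⊤) : Subgroup.closure {(x : G ⧸ N), (y : G ⧸ N)} = ⊤ := by
  have hmap := MonoidHom.map_closure (QuotientGroup.mk' N) {x, y}
  rw [h, Subgroup.map_top_of_surjective _ (QuotientGroup.mk'_surjective N), Set.image_pair] at hmap
  exact hmap.symm

end Lift

section FreeProduct

variable {H : Type*} [Group H]

/-- The standard generator of the factor `C₂` of `C₂ ∗ C₃`. -/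
def genTwo : Monoid.Coprod (Cyc 2) (Cyc 3) := Monoid.Coprod.inl (Multiplicative.ofAdd 1)

/-- The standard generator of the factor `C₃` of `C₂ ∗ C₃`. -/
def genThree : Monoid.Coprod (Cyc 2) (Cyc 3) := Monoid.Coprod.inr (Multiplicative.ofAdd 1)

lemma mem_zpowers_ofAdd_one {m : ℕ} (x : Cyc m) :
    x ∈ Subgroup.zpowers (Multiplicative.ofAdd (1 : ZMod m)) := by
  obtain ⟨k, hk⟩ := ZMod.intCast_surjective x.toAdd
  exact ⟨k, by simp [← ofAdd_zsmul, hk]⟩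

lemma closure_genTwo_genThree : Subgroup.closure {genTwo, genThree} = ⊤ := by
  rw [Subgroup.eq_top_iff']
  intro x
  induction x using Monoid.Coprod.induction_on with
  | inl x =>
    obtain ⟨k, rfl⟩ := mem_zpowers_ofAdd_one x
    rw [map_zpow]
    exact zpow_mem (Subgroup.subset_closure (Set.mem_insert genTwo _)) k
  | inr x =>
    obtain ⟨k, rfl⟩ := mem_zpowers_ofAdd_one x
    rw [map_zpow]
    refine zpow_mem (Subgroup.subset_closure ?_) k
    exact Set.mem_insert_of_mem _ (Set.mem_singleton genThree)
  | mul x y hx hy => exact mul_mem hx hy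

lemma genTwo_pow_two : genTwo ^ 2 = 1 := by
  rw [genTwo, ← map_pow, show Multiplicative.ofAdd (1 : ZMod 2) ^ 2 = 1 from rfl, map_one]

lemma genThree_pow_three : genThree ^ 3 = 1 := by
  rw [genThree, ← map_pow, show Multiplicative.ofAdd (1 : ZMod 3) ^ 3 = 1 from rfl, map_one]

lemma exists_hom_cyc {m : ℕ} {u : H} (hu : u ^ m = 1) :
    ∃ f : Cyc m →* H, f (Multiplicative.ofAdd 1) = u := by
  have hord : orderOf u ∣ orderOf (Multiplicative.ofAdd (1 : ZMod m)) := by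
    rw [orderOf_ofAdd_eq_addOrderOf, ZMod.addOrderOf_one]
    exact orderOf_dvd_of_pow_eq_one hu
  exact ⟨monoidHomOfForallMemZpowers mem_zpowers_ofAdd_one hord,
    monoidHomOfForallMemZpowers_apply_gen mem_zpowers_ofAdd_one hord⟩

lemma exists_hom_freeProduct {u v : H} (hu : u ^ 2 = 1) (hv : v ^ 3 = 1) :
    ∃ φ : Monoid.Coprod (Cyc 2) (Cyc 3) →* H, φ genTwo = u ∧ φ genThree = v := by
  obtain ⟨f, hf⟩ := exists_hom_cyc hu
  obtain ⟨g, hg⟩ := exists_hom_cyc hv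
  exact ⟨Monoid.Coprod.lift f g, by simp [genTwo, hf], by simp [genThree, hg]⟩

end FreeProduct

section Projective

variable {R : Type*} [CommRing R]

lemma neg_one_mem_center : (-1 : SL(2, R)) ∈ Subgroup.center SL(2, R) :=
  Subgroup.mem_center_iff.2 fun g ↦ by simp

lemma mk_neg (A : SL(2, R)) : ((-A : SL(2, R)) : PSL(2, R)) = A :=
  QuotientGroup.eq.2 (by simpa using neg_one_mem_center)

lemma sq_eq_neg_one_of_trace_eq_zero {A : SL(2, R)} (hA : A.1.trace = 0) : A ^ 2 = -1 := by
  apply Subtype.ext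
  rw [pow_two, Matrix.SpecialLinearGroup.coe_mul, mul_self_eq_trace_smul_sub, hA, zero_smul,
    zero_sub, Matrix.SpecialLinearGroup.coe_neg, Matrix.SpecialLinearGroup.coe_one]

lemma coe_pow_three (A : SL(2, R)) :
    (A ^ 3).1 = (A.1.trace ^ 2 - 1) • A.1 - A.1.trace • 1 := by
  rw [pow_three, Matrix.SpecialLinearGroup.coe_mul, Matrix.SpecialLinearGroup.coe_mul,
    mul_self_eq_trace_smul_sub, mul_sub, mul_smul_comm, mul_one, mul_self_eq_trace_smul_sub]
  module

lemma pow_three_eq_neg_one_of_trace_eq_one {B : SL(2, R)} (hB : B.1.trace = 1) :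
    B ^ 3 = -1 := by
  apply Subtype.ext
  rw [coe_pow_three, hB, Matrix.SpecialLinearGroup.coe_neg, Matrix.SpecialLinearGroup.coe_one]
  module

lemma exists_hom_of_trace {A B : SL(2, R)} (hA : A.1.trace = 0) (hB : B.1.trace = 1) :
    ∃ φ : Monoid.Coprod (Cyc 2) (Cyc 3) →* PSL(2, R), φ genTwo = A ∧ φ genThree = B := by
  have hneg : ((-1 : SL(2, R)) : PSL(2, R)) = 1 := mk_neg 1
  refine exists_hom_freeProduct ?_ ?_
  · rw [← QuotientGroup.mk_pow, sq_eq_neg_one_of_trace_eq_zero hA, hneg]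
  · rw [← QuotientGroup.mk_pow, pow_three_eq_neg_one_of_trace_eq_one hB, hneg]

lemma commTrace_eq_of_mk_eq {X₁ X₂ Y₁ Y₂ : SL(2, R)} (hX : (X₁ : PSL(2, R)) = X₂)
    (hY : (Y₁ : PSL(2, R)) = Y₂) : commTrace X₁ Y₁ = commTrace X₂ Y₂ := by
  rw [commTrace, commutatorElement_eq_of_mk_eq hX hY, commTrace]

lemma commTrace_eq_of_trace {A B : SL(2, R)} (hA : A.1.trace = 0) (hB : B.1.trace = 1) :
    commTrace A B = (A * B).1.trace ^ 2 - 1 := by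
  rw [commTrace_eq, hA, hB]
  ring

lemma trace_specialLinearGroup_map {R' : Type*} [CommRing R'] (f : R →+* R') (A : SL(2, R)) :
    (Matrix.SpecialLinearGroup.map f A).1.trace = f A.1.trace := by
  simp [trace_fin_two]

lemma commTrace_map {R' : Type*} [CommRing R'] (f : R →+* R') (X Y : SL(2, R)) :
    commTrace (Matrix.SpecialLinearGroup.map f X) (Matrix.SpecialLinearGroup.map f Y) =
      f (commTrace X Y) := by
  rw [commTrace, ← map_commutatorElement, trace_specialLinearGroup_map, commTrace]

lemma exists_commTrace_sub_two_eq_of_lift {G H : Type*} [Group G] [Group H] {S : Subring R}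
    {π : SL(2, R) →* H}
    (hπ : ∀ X₁ X₂ Y₁ Y₂, π X₁ = π X₂ → π Y₁ = π Y₂ → commTrace X₁ Y₁ = commTrace X₂ Y₂)
    {φ : G →* H} {a b g₁ g₂ : G} (hab : Subgroup.closure {a, b} = ⊤)
    (hg : Subgroup.closure {g₁, g₂} = ⊤) {A B : SL(2, R)} (hAφ : π A = φ a) (hBφ : π B = φ b)
    (hA : A.1.trace ∈ S) (hB : B.1.trace ∈ S) (hAB : (A * B).1.trace ∈ S) :
    ∃ X ∈ Subgroup.closure {A, B}, ∃ Y ∈ Subgroup.closure {A, B}, π X = φ g₁ ∧ π Y = φ g₂ ∧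
      ∃ s ∈ S, ∃ s' ∈ S, commTrace X Y - 2 = s * (commTrace A B - 2) ∧
        commTrace A B - 2 = s' * (commTrace X Y - 2) := by
  obtain ⟨X, hX, hXφ⟩ := exists_mem_closure_map_eq hab hAφ hBφ g₁
  obtain ⟨Y, hY, hYφ⟩ := exists_mem_closure_map_eq hab hAφ hBφ g₂
  obtain ⟨A', hA', hA'φ⟩ := exists_mem_closure_map_eq hg hXφ hYφ a
  obtain ⟨B', hB', hB'φ⟩ := exists_mem_closure_map_eq hg hXφ hYφ b
  have trace_mem {Z} (hZ : Z ∈ Subgroup.closure {A, B}) : Z.1.trace ∈ S :=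
    trace_mem_of_mem_closure hA hB hAB hZ
  obtain ⟨s, hs, hXY⟩ := exists_commTrace_sub_two_eq hA hB hAB hX hY
  obtain ⟨s', hs', hAB'⟩ := exists_commTrace_sub_two_eq (trace_mem hX) (trace_mem hY)
    (trace_mem (mul_mem hX hY)) hA' hB'
  refine ⟨X, hX, Y, hY, hXφ, hYφ, s, hs, s', hs', hXY, ?_⟩
  rw [← hAB', hπ A' A B' B (hA'φ.trans hAφ.symm) (hB'φ.trans hBφ.symm)]

end Projective

section Unitary

/-- The subgroup `SU(2)` of `SL(2, ℂ)`. -/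
def su2 : Subgroup SL(2, ℂ) :=
  (Unitary.toUnits (R := Matrix (Fin 2) (Fin 2) ℂ)).range.comap Matrix.SpecialLinearGroup.toGL

lemma mem_su2_iff {A : SL(2, ℂ)} : A ∈ su2 ↔ A.1 ∈ unitaryGroup (Fin 2) ℂ := by
  refine ⟨?_, fun h ↦ ⟨⟨A.1, h⟩, Units.ext rfl⟩⟩
  rintro ⟨U, hU⟩
  have hUA : U.1 = A.1 := congr_arg Units.val hU
  exact hUA ▸ U.2

lemma norm_trace_le_two {A : SL(2, ℂ)} (hA : A ∈ su2) : ‖A.1.trace‖ ≤ 2 := by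
  rw [trace_fin_two]
  have h (i : Fin 2) : ‖A.1 i i‖ ≤ 1 := entry_norm_bound_of_unitary (mem_su2_iff.1 hA) i i
  linarith [norm_add_le (A.1 0 0) (A.1 1 1), h 0, h 1]

lemma norm_commTrace_le_two {X Y : SL(2, ℂ)} (hX : X ∈ su2) (hY : Y ∈ su2) :
    ‖commTrace X Y‖ ≤ 2 :=
  norm_trace_le_two (mul_mem (mul_mem (mul_mem hX hY) (inv_mem hX)) (inv_mem hY))

lemma exists_transcendental_sq_lt_three : ∃ t : ℝ, Transcendental ℤ t ∧ t ^ 2 < 3 := by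
  obtain ⟨t, ht, h0, h1⟩ :=
    ((Algebraic.countable ℤ ℝ).dense_compl ℝ).exists_between zero_lt_one
  exact ⟨t, ht, by nlinarith⟩

lemma exists_mem_su2_trace_eq {t : ℝ} (ht : t ^ 2 < 3) : ∃ A ∈ su2, ∃ B ∈ su2,
    A.1.trace = 0 ∧ B.1.trace = 1 ∧ (A * B).1.trace = t := by
  obtain ⟨z, hz⟩ : ∃ z : ℝ, z ^ 2 = (3 - t ^ 2) / 4 :=
    ⟨√((3 - t ^ 2) / 4), Real.sq_sqrt (by linarith)⟩
  have hz' : (z : ℂ) ^ 2 = (3 - t ^ 2) / 4 := by exact_mod_cast congr_arg Complex.ofReal hz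
  have hI := Complex.I_sq
  have hstar : (starRingEnd ℂ) 2 = 2 := Complex.conj_ofNat 2
  let A : SL(2, ℂ) := ⟨!![Complex.I, 0; 0, -Complex.I], by simp [det_fin_two_of]⟩
  let B : SL(2, ℂ) := ⟨!![(1 - t * Complex.I) / 2, z; -z, (1 + t * Complex.I) / 2], by
    rw [det_fin_two_of]
    linear_combination hz' - t ^ 2 / 4 * hI⟩
  refine ⟨A, mem_su2_iff.2 ?_, B, mem_su2_iff.2 ?_, ?_, ?_, ?_⟩
  · rw [mem_unitaryGroup_iff]
    ext i j
    fin_cases i <;> fin_cases j <;> simp [A, mul_apply, star_apply]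
  · rw [mem_unitaryGroup_iff]
    ext i j
    fin_cases i <;> fin_cases j <;> simp [B, mul_apply, star_apply, hstar] <;> grind
  · simp [A, trace_fin_two_of]
  · simp only [B, trace_fin_two_of]
    ring
  · rw [Matrix.SpecialLinearGroup.coe_mul, mul_fin_two, trace_fin_two_of]
    linear_combination -t * hI

end Unitary

section Rigidity

open Polynomial

lemma eq_one_or_eq_neg_one_of_aeval_mul_eq_one {R : Type*} [CommRing R] {t : R}
    (ht : Transcendental ℤ t) {p q : ℤ[X]} (h : aeval t p * aeval t q = 1) : p = 1 ∨ p = -1 := by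
  have hpq : p * q = 1 := transcendental_iff_injective.1 ht (by rw [map_mul, h, map_one])
  obtain ⟨r, hr, rfl⟩ := isUnit_iff.1 (IsUnit.of_mul_eq_one q hpq)
  obtain rfl | rfl := Int.isUnit_iff.1 hr <;> simp

variable {R : Type*} [CommRing R]

lemma exists_map_fst_eq_map_snd_eq {R₁ R₂ : Type*} [CommRing R₁] [CommRing R₂]
    (A₁ : SL(2, R₁)) (A₂ : SL(2, R₂)) :
    ∃ A : SL(2, R₁ × R₂), Matrix.SpecialLinearGroup.map (RingHom.fst R₁ R₂) A = A₁ ∧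
      Matrix.SpecialLinearGroup.map (RingHom.snd R₁ R₂) A = A₂ := by
  refine ⟨⟨of fun i j ↦ (A₁.1 i j, A₂.1 i j), ?_⟩, rfl, rfl⟩
  have h₁ := A₁.2
  have h₂ := A₂.2
  rw [det_fin_two] at h₁ h₂ ⊢
  exact Prod.ext h₁ h₂

lemma aeval_trace_map {R' : Type*} [CommRing R'] (f : R →+* R') (A : SL(2, R)) (p : ℤ[X]) :
    aeval (Matrix.SpecialLinearGroup.map f A).1.trace p = f (aeval A.1.trace p) := by
  rw [trace_specialLinearGroup_map]
  exact aeval_algHom_apply f.toIntAlgHom A.1.trace p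

lemma exists_commTrace_sub_two_eq_aeval {R₁ R₂ : Type*} [CommRing R₁] [CommRing R₂]
    {φ₁ : Monoid.Coprod (Cyc 2) (Cyc 3) →* PSL(2, R₁)}
    {φ₂ : Monoid.Coprod (Cyc 2) (Cyc 3) →* PSL(2, R₂)} {A₁ B₁ : SL(2, R₁)} {A₂ B₂ : SL(2, R₂)}
    (hA₁ : A₁.1.trace = 0) (hB₁ : B₁.1.trace = 1) (hA₂ : A₂.1.trace = 0) (hB₂ : B₂.1.trace = 1)
    (hAφ₁ : φ₁ genTwo = A₁) (hBφ₁ : φ₁ genThree = B₁)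
    (hAφ₂ : φ₂ genTwo = A₂) (hBφ₂ : φ₂ genThree = B₂)
    {g₁ g₂ : Monoid.Coprod (Cyc 2) (Cyc 3)} (hg : Subgroup.closure {g₁, g₂} = ⊤) :
    ∃ X₁ ∈ Subgroup.closure {A₁, B₁}, ∃ Y₁ ∈ Subgroup.closure {A₁, B₁}, ∃ X₂ Y₂ : SL(2, R₂),
      φ₂ g₁ = X₂ ∧ φ₂ g₂ = Y₂ ∧ ∃ p q : ℤ[X],
      commTrace X₁ Y₁ - 2 = aeval (A₁ * B₁).1.trace p * (commTrace A₁ B₁ - 2) ∧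
      commTrace A₁ B₁ - 2 = aeval (A₁ * B₁).1.trace q * (commTrace X₁ Y₁ - 2) ∧
      commTrace X₂ Y₂ - 2 = aeval (A₂ * B₂).1.trace p * (commTrace A₂ B₂ - 2) := by
  -- Over `R₁ × R₂` both representations run at once, so the same integer polynomials serve both.
  obtain ⟨A, rfl, rfl⟩ := exists_map_fst_eq_map_snd_eq A₁ A₂
  obtain ⟨B, rfl, rfl⟩ := exists_map_fst_eq_map_snd_eq B₁ B₂
  rw [trace_specialLinearGroup_map] at hA₁ hA₂ hB₁ hB₂
  let fst := Matrix.SpecialLinearGroup.map (n := Fin 2) (RingHom.fst R₁ R₂)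
  let snd := Matrix.SpecialLinearGroup.map (n := Fin 2) (RingHom.snd R₁ R₂)
  let π := ((QuotientGroup.mk' (Subgroup.center SL(2, R₁))).comp fst).prod
    ((QuotientGroup.mk' (Subgroup.center SL(2, R₂))).comp snd)
  have hπ (X X' Y Y') (hX : π X = π X') (hY : π Y = π Y') : commTrace X Y = commTrace X' Y' := by
    have h₁ := commTrace_eq_of_mk_eq (congr_arg Prod.fst hX) (congr_arg Prod.fst hY)
    have h₂ := commTrace_eq_of_mk_eq (congr_arg Prod.snd hX) (congr_arg Prod.snd hY)
    rw [commTrace_map, commTrace_map] at h₁ h₂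
    exact Prod.ext h₁ h₂
  let S := (aeval (R := ℤ) (A * B).1.trace).range.toSubring
  have hA : A.1.trace ∈ S := by convert zero_mem S; exact Prod.ext hA₁ hA₂
  have hB : B.1.trace ∈ S := by convert one_mem S; exact Prod.ext hB₁ hB₂
  obtain ⟨X, hX, Y, hY, hXφ, hYφ, _, ⟨p, rfl⟩, _, ⟨q, rfl⟩, hp, hq⟩ :=
    exists_commTrace_sub_two_eq_of_lift (φ := φ₁.prod φ₂) hπ closure_genTwo_genThree hg
      (Prod.ext hAφ₁.symm hAφ₂.symm) (Prod.ext hBφ₁.symm hBφ₂.symm) hA hB ⟨Polynomial.X, aeval_X _⟩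
  have fst_mem {Z} (hZ : Z ∈ Subgroup.closure {A, B}) :
      fst Z ∈ Subgroup.closure {fst A, fst B} := by
    rw [← Set.image_pair, ← MonoidHom.map_closure]
    exact Subgroup.mem_map_of_mem fst hZ
  refine ⟨fst X, fst_mem hX, fst Y, fst_mem hY, snd X, snd Y, (congr_arg Prod.snd hXφ).symm,
    (congr_arg Prod.snd hYφ).symm, p, q, ?_⟩
  simp only [fst, snd, ← map_mul, commTrace_map, aeval_trace_map]
  exact ⟨congr_arg Prod.fst hp, congr_arg Prod.fst hq, congr_arg Prod.snd hp⟩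

theorem commTrace_eq_of_closure_eq_top
    {φ : Monoid.Coprod (Cyc 2) (Cyc 3) →* PSL(2, R)} {A B X Y : SL(2, R)}
    (hA : A.1.trace = 0) (hB : B.1.trace = 1) (hAφ : φ genTwo = A) (hBφ : φ genThree = B)
    {g₁ g₂ : Monoid.Coprod (Cyc 2) (Cyc 3)} (hg : Subgroup.closure {g₁, g₂} = ⊤)
    (hX : φ g₁ = X) (hY : φ g₂ = Y) : commTrace X Y = (A * B).1.trace ^ 2 - 1 := by
  obtain ⟨t, htrans, ht⟩ := exists_transcendental_sq_lt_three
  obtain ⟨A₁, hA₁, B₁, hB₁, hA₁0, hB₁1, htr⟩ := exists_mem_su2_trace_eq ht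
  obtain ⟨φ₁, hA₁φ, hB₁φ⟩ := exists_hom_of_trace hA₁0 hB₁1
  obtain ⟨X₁, hX₁, Y₁, hY₁, X₂, Y₂, hX₂, hY₂, p, q, hp, hq, hXY⟩ :=
    exists_commTrace_sub_two_eq_aeval hA₁0 hB₁1 hA hB hA₁φ hB₁φ hAφ hBφ hg
  rw [commTrace_eq_of_trace hA₁0 hB₁1, htr] at hp hq
  rw [commTrace_eq_of_mk_eq (hX₂.symm.trans hX) (hY₂.symm.trans hY),
    commTrace_eq_of_trace hA hB] at hXY
  have htrans' : Transcendental ℤ (t : ℂ) :=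
    (transcendental_algebraMap_iff (algebraMap ℝ ℂ).injective).2 htrans
  have ht3 : (t : ℂ) ^ 2 - 1 - 2 ≠ 0 := by
    exact_mod_cast (show t ^ 2 - 1 - 2 < 0 by linarith).ne
  have hpq : aeval (t : ℂ) p * aeval (t : ℂ) q = 1 := by
    apply mul_right_cancel₀ ht3
    rw [one_mul, mul_right_comm, ← hp, mul_comm, ← hq]
  obtain rfl | rfl := eq_one_or_eq_neg_one_of_aeval_mul_eq_one htrans' hpq
  · rw [map_one] at hXY
    linear_combination hXY
  -- If `p = -1`, then `commTrace X₁ Y₁ = 5 - t ^ 2 > 2`, which is impossible in `SU(2)`.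
  · have hle : Subgroup.closure {A₁, B₁} ≤ su2 := by
      rw [Subgroup.closure_le, Set.pair_subset_iff]
      exact ⟨hA₁, hB₁⟩
    have heq : commTrace X₁ Y₁ = (5 - t ^ 2 : ℝ) := by
      push_cast
      rw [map_neg, map_one] at hp
      linear_combination hp
    have hnorm := norm_commTrace_le_two (hle hX₁) (hle hY₁)
    rw [heq, Complex.norm_real, Real.norm_eq_abs] at hnorm
    linarith [le_abs_self (5 - t ^ 2)]

end Rigidity

section Lifting

variable {F : Type*} [Field F]

lemma commTrace_eq_two_of_commute {R : Type*} [CommRing R] {A B : SL(2, R)} (h : Commute A B) :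
    commTrace A B = 2 := by
  rw [commTrace, commutatorElement_eq_one_iff_commute.2 h, Matrix.SpecialLinearGroup.coe_one,
    trace_one, Fintype.card_fin, Nat.cast_ofNat]

lemma mem_center_of_smul_add_smul_eq {A C : SL(2, F)} (hC : C ∈ Subgroup.center SL(2, F)) {r s : F}
    (hr : r ≠ 0) (h : C.1 = r • A.1 + s • 1) : A ∈ Subgroup.center SL(2, F) := by
  refine Subgroup.mem_center_iff.2 fun g ↦ Subtype.ext ?_
  have hcomm : g.1 * C.1 = C.1 * g.1 := congr_arg Subtype.val (Subgroup.mem_center_iff.1 hC g)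
  rw [Matrix.SpecialLinearGroup.coe_mul, Matrix.SpecialLinearGroup.coe_mul]
  simpa only [h, mul_add, add_mul, mul_smul_comm, smul_mul_assoc, mul_one, one_mul,
    add_left_inj, smul_right_inj hr] using hcomm

lemma trace_eq_zero_of_sq_mem_center {A : SL(2, F)} (hA : A ∉ Subgroup.center SL(2, F))
    (hA2 : A ^ 2 ∈ Subgroup.center SL(2, F)) : A.1.trace = 0 := by
  by_contra h
  refine hA (mem_center_of_smul_add_smul_eq (s := -1) hA2 h ?_)
  rw [pow_two, Matrix.SpecialLinearGroup.coe_mul, mul_self_eq_trace_smul_sub, neg_one_smul,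
    sub_eq_add_neg]

lemma trace_eq_one_or_of_pow_three_mem_center {B : SL(2, F)} (hB : B ∉ Subgroup.center SL(2, F))
    (hB3 : B ^ 3 ∈ Subgroup.center SL(2, F)) : B.1.trace = 1 ∨ B.1.trace = -1 := by
  by_contra! h
  refine hB (mem_center_of_smul_add_smul_eq (r := B.1.trace ^ 2 - 1) (s := -B.1.trace) hB3 ?_ ?_)
  · exact sub_ne_zero.2 (sq_ne_one_iff.2 h)
  · rw [coe_pow_three, neg_smul, sub_eq_add_neg]

lemma eq_or_eq_neg_of_mk_eq {X Y : SL(2, F)} (h : (X : PSL(2, F)) = Y) : Y = X ∨ Y = -X := by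
  obtain ⟨r, hr, hrXY⟩ := Matrix.SpecialLinearGroup.mem_center_iff.1 (QuotientGroup.eq.1 h)
  have hY : Y.1 = r • X.1 := by
    rw [← mul_inv_cancel_left X Y, Matrix.SpecialLinearGroup.coe_mul, ← hrXY, scalar_apply,
      ← smul_one_eq_diagonal, mul_smul_comm, mul_one]
  rw [Fintype.card_fin, sq_eq_one_iff] at hr
  obtain rfl | rfl := hr
  · exact Or.inl (Subtype.ext (by rw [hY, one_smul]))
  · exact Or.inr (Subtype.ext (by rw [hY, neg_one_smul, Matrix.SpecialLinearGroup.coe_neg]))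

variable {φ : Monoid.Coprod (Cyc 2) (Cyc 3) →* PSL(2, F)} {X Y : SL(2, F)}
    {g₁ g₂ : Monoid.Coprod (Cyc 2) (Cyc 3)}

theorem exists_trace_eq_of_lift (hg : Subgroup.closure {g₁, g₂} = ⊤) (hX : φ g₁ = X)
    (hY : φ g₂ = Y) (hXY : commTrace X Y ≠ 2) : ∃ A B : SL(2, F),
      A.1.trace = 0 ∧ B.1.trace = 1 ∧ φ genTwo = A ∧ φ genThree = B := by
  obtain ⟨A, hA⟩ := QuotientGroup.mk_surjective (φ genTwo)
  obtain ⟨B, hB⟩ := QuotientGroup.mk_surjective (φ genThree)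
  have hAB : ¬Commute A B := by
    intro h
    obtain ⟨X', -, Y', -, hX', hY', s, -, -, -, hs, -⟩ :=
      exists_commTrace_sub_two_eq_of_lift (S := ⊤)
        (π := QuotientGroup.mk' (Subgroup.center SL(2, F)))
        (fun _ _ _ _ ↦ commTrace_eq_of_mk_eq) closure_genTwo_genThree hg hA hB trivial trivial
        trivial
    rw [commTrace_eq_two_of_commute h, sub_self, mul_zero, sub_eq_zero] at hs
    exact hXY (commTrace_eq_of_mk_eq (hX'.trans hX) (hY'.trans hY) ▸ hs)
  have hA0 : A.1.trace = 0 := by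
    refine trace_eq_zero_of_sq_mem_center
      (fun h ↦ hAB (Subgroup.mem_center_iff.1 h B).symm) ?_
    rw [← QuotientGroup.eq_one_iff, QuotientGroup.mk_pow, hA, ← map_pow, genTwo_pow_two, map_one]
  have hB3 : B ^ 3 ∈ Subgroup.center SL(2, F) := by
    rw [← QuotientGroup.eq_one_iff, QuotientGroup.mk_pow, hB, ← map_pow, genThree_pow_three,
      map_one]
  obtain hB1 | hB1 := trace_eq_one_or_of_pow_three_mem_center
    (fun h ↦ hAB (Subgroup.mem_center_iff.1 h A)) hB3
  · exact ⟨A, B, hA0, hB1, hA.symm, hB.symm⟩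
  · refine ⟨A, -B, hA0, ?_, hA.symm, ((mk_neg B).trans hB).symm⟩
    rw [Matrix.SpecialLinearGroup.coe_neg, trace_neg, hB1, neg_neg]

theorem isSquare_commTrace_add_one_of_lift (hg : Subgroup.closure {g₁, g₂} = ⊤) (hX : φ g₁ = X)
    (hY : φ g₂ = Y) (hXY : commTrace X Y ≠ 2) : IsSquare (commTrace X Y + 1) := by
  obtain ⟨A, B, hA, hB, hAφ, hBφ⟩ := exists_trace_eq_of_lift hg hX hY hXY
  rw [commTrace_eq_of_closure_eq_top hA hB hAφ hBφ hg hX hY, sub_add_cancel]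
  exact IsSquare.sq _

theorem trace_mem_range_intCast_of_lift (hg : Subgroup.closure {g₁, g₂} = ⊤) (hX : φ g₁ = X)
    (hY : φ g₂ = Y) (hXY : commTrace X Y ≠ 2) (hXY' : commTrace X Y = -1)
    (g : Monoid.Coprod (Cyc 2) (Cyc 3)) {Z : SL(2, F)} (hZ : φ g = Z) :
    Z.1.trace ∈ (Int.castRingHom F).range := by
  obtain ⟨A, B, hA, hB, hAφ, hBφ⟩ := exists_trace_eq_of_lift hg hX hY hXY
  have hAB : (A * B).1.trace = 0 := by
    have h := commTrace_eq_of_closure_eq_top hA hB hAφ hBφ hg hX hY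
    exact pow_eq_zero_iff two_ne_zero |>.1 (by linear_combination hXY' - h)
  obtain ⟨Z', hZ', hZφ⟩ := exists_mem_closure_map_eq
    (π := QuotientGroup.mk' (Subgroup.center SL(2, F))) closure_genTwo_genThree hAφ.symm hBφ.symm g
  have hmem := trace_mem_of_mem_closure (S := (Int.castRingHom F).range)
    (by rw [hA]; exact zero_mem _) (by rw [hB]; exact one_mem _) (by rw [hAB]; exact zero_mem _) hZ'
  obtain rfl | rfl := eq_or_eq_neg_of_mk_eq (hZφ.trans hZ)
  · exact hmem
  · rw [Matrix.SpecialLinearGroup.coe_neg, trace_neg]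
    exact neg_mem hmem

end Lifting

section Generation

open Matrix.SpecialLinearGroup (diag2)

variable {F : Type*} [Field F] {M : Subgroup SL(2, F)}

/-- The upper unitriangular matrix with corner entry `x`. -/
abbrev upper (x : F) : SL(2, F) := Matrix.SpecialLinearGroup.transvection zero_ne_one x

lemma coe_upper (x : F) : (upper x).1 = !![1, x; 0, 1] := by
  ext i j
  fin_cases i <;> fin_cases j <;> simp [Matrix.SpecialLinearGroup.transvection_coe]

lemma upper_add (x y : F) : upper (x + y) = upper x * upper y :=
  Matrix.SpecialLinearGroup.transvection_add zero_ne_one x y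

lemma exists_antidiagonal_mem (hU : ∀ x, upper x ∈ M) {g : SL(2, F)} (hg : g ∈ M)
    (hg10 : g.1 1 0 ≠ 0) : ∃ w ∈ M, w.1 = !![0, -(g.1 1 0)⁻¹; g.1 1 0, 0] := by
  refine ⟨upper (-(g.1 0 0 / g.1 1 0)) * g * upper (-(g.1 1 1 / g.1 1 0)),
    mul_mem (mul_mem (hU _) hg) (hU _), ?_⟩
  have hdet := g.2
  rw [det_fin_two] at hdet
  rw [Matrix.SpecialLinearGroup.coe_mul, Matrix.SpecialLinearGroup.coe_mul, coe_upper, coe_upper,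
    g.1.eta_fin_two]
  ext i j
  fin_cases i <;> fin_cases j <;> simp <;> field_simp <;> grind

lemma eq_top_of_upper_mem (hU : ∀ x, upper x ∈ M) {g : SL(2, F)} (hg : g ∈ M)
    (hg10 : g.1 1 0 ≠ 0) : M = ⊤ := by
  obtain ⟨w, hw, hw_eq⟩ := exists_antidiagonal_mem hU hg hg10
  have hL (x : F) : Matrix.SpecialLinearGroup.transvection one_ne_zero x ∈ M := by
    have hconj : Matrix.SpecialLinearGroup.transvection one_ne_zero x =
        w * upper (-(x / g.1 1 0 ^ 2)) * w⁻¹ := by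
      refine eq_mul_inv_of_mul_eq (Subtype.ext ?_)
      rw [Matrix.SpecialLinearGroup.coe_mul, Matrix.SpecialLinearGroup.coe_mul, coe_upper,
        Matrix.SpecialLinearGroup.transvection_coe, hw_eq]
      ext i j
      fin_cases i <;> fin_cases j <;> simp [add_mul, field]
    exact hconj ▸ mul_mem (mul_mem hw (hU _)) (inv_mem hw)
  refine (Subgroup.eq_top_iff' M).2 fun A ↦
    SL2.transvection_induction (· ∈ M) (fun i j hij x ↦ ?_) (fun _ _ ↦ mul_mem) A
  fin_cases i <;> fin_cases j
  exacts [absurd rfl hij, hU x, hL x, absurd rfl hij]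

lemma sub_inv_ne_zero {l : F} (hl : l ≠ 0) (hl2 : l ^ 2 ≠ 1) : l - l⁻¹ ≠ 0 := by
  grind

lemma exists_eq_sq_sub_sq [Finite F] (x : F) : ∃ a b : F, x = a ^ 2 - b ^ 2 := by
  by_cases h : ringChar F = 2
  · obtain ⟨a, rfl⟩ := FiniteField.isSquare_of_char_two h x
    exact ⟨a, 0, by ring⟩
  · have h2 : (2 : F) ≠ 0 := Ring.two_ne_zero h
    exact ⟨(x + 1) / 2, (x - 1) / 2, by field_simp; ring⟩

lemma isSquare_mul_of_not_isSquare [Finite F] {x y : F} (hx : ¬IsSquare x) (hy : ¬IsSquare y) :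
    IsSquare (x * y) := by
  classical
  have := Fintype.ofFinite F
  have hxy : x * y ≠ 0 :=
    mul_ne_zero (fun h ↦ hx (h ▸ .zero)) (fun h ↦ hy (h ▸ .zero))
  rw [← quadraticChar_one_iff_isSquare hxy, map_mul,
    quadraticChar_neg_one_iff_not_isSquare.2 hx, quadraticChar_neg_one_iff_not_isSquare.2 hy]
  rfl

section Torus

variable (hD : ∀ (x : F) (hx : x ≠ 0), diag2 x hx ∈ M)
include hD

lemma upper_mul_sq_mem {y : F} (hy : upper y ∈ M) (a : F) : upper (y * a ^ 2) ∈ M := by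
  by_cases ha : a = 0
  · simp [ha, Matrix.SpecialLinearGroup.transvection_coeff_zero, one_mem]
  · rw [show y * a ^ 2 = y * (a ^ 2 - 1) + y by ring, upper_add,
      upper, ← commutator_diag2_transvection a ha y _ rfl]
    exact mul_mem (mul_mem (mul_mem (mul_mem (hD a ha) hy) (inv_mem (hD a ha))) (inv_mem hy)) hy

lemma upper_mem_of_upper_mem [Finite F] {y : F} (hy0 : y ≠ 0) (hy : upper y ∈ M) (x : F) :
    upper x ∈ M := by
  obtain ⟨a, b, hab⟩ := exists_eq_sq_sub_sq (x / y)
  have hx : x = y * a ^ 2 + -(y * b ^ 2) := by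
    rw [← sub_eq_add_neg, ← mul_sub, ← hab, mul_div_cancel₀ x hy0]
  rw [hx, upper_add]
  refine mul_mem (upper_mul_sq_mem hD hy a) ?_
  rw [upper, ← Matrix.SpecialLinearGroup.transvection_inv]
  exact inv_mem (upper_mul_sq_mem hD hy b)

lemma eq_top_of_lower_left_eq_zero [Finite F] {g h : SL(2, F)} (hg : g ∈ M) (hg10 : g.1 1 0 ≠ 0)
    (hh : h ∈ M) (hh10 : h.1 1 0 = 0) (hh01 : h.1 0 1 ≠ 0) : M = ⊤ := by
  have hdet := h.2
  rw [det_fin_two, hh10, mul_zero, sub_zero] at hdet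
  have hh00 : h.1 0 0 ≠ 0 := left_ne_zero_of_mul_eq_one hdet
  have hupper : diag2 (h.1 0 0) hh00 * upper (h.1 0 1 / h.1 0 0) = h := by
    refine Subtype.ext ?_
    rw [Matrix.SpecialLinearGroup.coe_mul, Matrix.SpecialLinearGroup.diag2_coe', coe_upper,
      h.1.eta_fin_two, hh10, eq_inv_of_mul_eq_one_right hdet]
    ext i j
    fin_cases i <;> fin_cases j <;> simp [field]
  refine eq_top_of_upper_mem (upper_mem_of_upper_mem hD (div_ne_zero hh01 hh00) ?_) hg hg10
  rw [eq_inv_mul_of_mul_eq hupper]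
  exact mul_mem (inv_mem (hD _ hh00)) hh

lemma eq_top_of_upper_left_eq_zero [Finite F] {l : F} (hl : l ≠ 0) (hl2 : l ^ 2 ≠ 1)
    {h : SL(2, F)} (hh : h ∈ M) (hh00 : h.1 0 0 = 0) (hh11 : h.1 1 1 ≠ 0) : M = ⊤ := by
  have hdet := h.2
  rw [det_fin_two, hh00, zero_mul, zero_sub] at hdet
  have hprod : h.1 0 1 * h.1 1 0 ≠ 0 := fun h0 ↦ by simp [h0] at hdet
  have hconj : (h⁻¹ * diag2 l hl * h).1 =
      !![l⁻¹, h.1 0 1 * h.1 1 1 * (l - l⁻¹); 0, l] := by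
    rw [Matrix.SpecialLinearGroup.coe_mul, Matrix.SpecialLinearGroup.coe_mul,
      Matrix.SpecialLinearGroup.diag2_coe', Matrix.SpecialLinearGroup.coe_inv, adjugate_fin_two,
      hh00, eta_fin_two h.1, hh00, mul_fin_two, mul_fin_two]
    ext i j
    fin_cases i <;> fin_cases j <;> simp <;> grind
  refine eq_top_of_lower_left_eq_zero hD hh (right_ne_zero_of_mul hprod)
    (mul_mem (mul_mem (inv_mem hh) (hD l hl)) hh) ?_ ?_
  · rw [hconj]
    rfl
  · rw [hconj]
    exact mul_ne_zero (mul_ne_zero (left_ne_zero_of_mul hprod) hh11) (sub_inv_ne_zero hl hl2)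

lemma exists_mul_diag2_mul_mem {g k : SL(2, F)} (hg : g ∈ M) (hk : k ∈ M) {n : F} (hn : n ≠ 0) :
    ∃ h ∈ M, h.1 = !![g.1 0 0 * n * k.1 0 0 + g.1 0 1 * n⁻¹ * k.1 1 0,
        g.1 0 0 * n * k.1 0 1 + g.1 0 1 * n⁻¹ * k.1 1 1;
      g.1 1 0 * n * k.1 0 0 + g.1 1 1 * n⁻¹ * k.1 1 0,
        g.1 1 0 * n * k.1 0 1 + g.1 1 1 * n⁻¹ * k.1 1 1] := by
  refine ⟨g * diag2 n hn * k, mul_mem (mul_mem hg (hD n hn)) hk, ?_⟩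
  rw [Matrix.SpecialLinearGroup.coe_mul, Matrix.SpecialLinearGroup.coe_mul,
    Matrix.SpecialLinearGroup.diag2_coe', eta_fin_two g.1, eta_fin_two k.1]
  simp

lemma eq_top_of_mul_diag2_mul_upper_left_eq_zero [Finite F] {l : F} (hl : l ≠ 0) (hl2 : l ^ 2 ≠ 1)
    {g k : SL(2, F)} (hg : g ∈ M) (hk : k ∈ M) {n : F} (hn : n ≠ 0)
    (h0 : n ^ 2 * (g.1 0 0 * k.1 0 0) + g.1 0 1 * k.1 1 0 = 0)
    (h1 : 1 + g.1 0 1 * g.1 1 0 + k.1 0 1 * k.1 1 0 ≠ 0) : M = ⊤ := by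
  obtain ⟨h, hh, h_eq⟩ := exists_mul_diag2_mul_mem hD hg hk hn
  have hg_det := g.2
  have hk_det := k.2
  rw [det_fin_two] at hg_det hk_det
  refine eq_top_of_upper_left_eq_zero hD hl hl2 hh ?_ ?_ <;> simp only [h_eq]
  · simp; grind
  · refine right_ne_zero_of_mul (a := g.1 0 0 * k.1 0 0 * n) ?_
    convert h1 using 1
    simp
    grind

lemma eq_top_of_mul_diag2_mul_lower_left_eq_zero [Finite F] {g k : SL(2, F)} (hg : g ∈ M)
    (hk : k ∈ M) {n : F} (hn : n ≠ 0)
    (h0 : n ^ 2 * (g.1 1 0 * k.1 0 0) + g.1 1 1 * k.1 1 0 = 0)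
    (h1 : g.1 0 1 * g.1 1 0 ≠ k.1 0 1 * k.1 1 0) : M = ⊤ := by
  obtain ⟨h, hh, h_eq⟩ := exists_mul_diag2_mul_mem hD hg hk hn
  have hg_det := g.2
  have hk_det := k.2
  rw [det_fin_two] at hg_det hk_det
  have hh10 : h.1 1 0 = 0 := by simp [h_eq]; grind
  have hh01 : h.1 0 1 ≠ 0 := by
    refine right_ne_zero_of_mul (a := g.1 1 0 * k.1 0 0 * n) ?_
    have := sub_ne_zero.2 h1
    convert this using 1
    simp [h_eq]
    grind
  by_cases hg10 : g.1 1 0 = 0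
  · refine eq_top_of_lower_left_eq_zero hD hk (fun hk10 ↦ h1 ?_) hh hh10 hh01
    rw [hg10, hk10, mul_zero, mul_zero]
  · exact eq_top_of_lower_left_eq_zero hD hg hg10 hh hh10 hh01

lemma eq_top_of_not_isSquare [Finite F] {l : F} (hl : l ≠ 0) (hl2 : l ^ 2 ≠ 1) {g k : SL(2, F)}
    (hg : g ∈ M) (hk : k ∈ M) (hsq : ¬IsSquare (g.1 0 0 * g.1 0 1 * g.1 1 0 * g.1 1 1))
    (hk00 : k.1 0 0 ≠ 0) (hk10 : k.1 1 0 ≠ 0)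
    (h1 : 1 + g.1 0 1 * g.1 1 0 + k.1 0 1 * k.1 1 0 ≠ 0)
    (h2 : g.1 0 1 * g.1 1 0 ≠ k.1 0 1 * k.1 1 0) : M = ⊤ := by
  have hg0 : g.1 0 0 * g.1 0 1 * g.1 1 0 * g.1 1 1 ≠ 0 := fun h ↦ hsq (h ▸ .zero)
  simp only [mul_ne_zero_iff] at hg0
  obtain ⟨⟨⟨hg00, hg01⟩, hg10⟩, hg11⟩ := hg0
  by_cases hr : IsSquare (-(g.1 0 1 * k.1 1 0) / (g.1 0 0 * k.1 0 0))
  · obtain ⟨n, hn⟩ := hr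
    exact eq_top_of_mul_diag2_mul_upper_left_eq_zero hD hl hl2 hg hk (n := n) (by grind) (by grind)
      h1
  by_cases hr' : IsSquare (-(g.1 1 1 * k.1 1 0) / (g.1 1 0 * k.1 0 0))
  · obtain ⟨n, hn⟩ := hr'
    exact eq_top_of_mul_diag2_mul_lower_left_eq_zero hD hg hk (n := n) (by grind) (by grind) h2
  have hprod : g.1 0 0 * g.1 0 1 * g.1 1 0 * g.1 1 1 =
      -(g.1 0 1 * k.1 1 0) / (g.1 0 0 * k.1 0 0) * (-(g.1 1 1 * k.1 1 0) / (g.1 1 0 * k.1 0 0)) *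
        (g.1 0 0 * g.1 1 0 * k.1 0 0 / k.1 1 0 * (g.1 0 0 * g.1 1 0 * k.1 0 0 / k.1 1 0)) := by
    field_simp
  exact absurd (hprod ▸ (isSquare_mul_of_not_isSquare hr hr').mul (IsSquare.mul_self _)) hsq

end Torus

lemma commTrace_diag2 {l : F} (hl : l ≠ 0) (g : SL(2, F)) :
    commTrace (diag2 l hl) g = 2 - g.1 0 1 * g.1 1 0 * (l - l⁻¹) ^ 2 := by
  have hg := g.2
  rw [det_fin_two] at hg
  rw [commTrace_eq, Matrix.SpecialLinearGroup.coe_mul, Matrix.SpecialLinearGroup.diag2_coe',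
    eta_fin_two g.1]
  simp [trace_fin_two]
  grind

section Generator

variable {l : Fˣ} (hl : ∀ x : Fˣ, x ∈ Subgroup.zpowers l)
include hl

lemma generator_pow_eq_one_iff {n : ℕ} : (l : F) ^ n = 1 ↔ Nat.card F - 1 ∣ n := by
  rw [← Nat.card_units, ← orderOf_eq_card_of_forall_mem_zpowers hl, orderOf_dvd_iff_pow_eq_one,
    ← Units.val_pow_eq_pow_val, Units.val_eq_one]

lemma generator_pow_ne_one {n : ℕ} (hn : n ≠ 0) (hcard : n + 1 < Nat.card F) :
    (l : F) ^ n ≠ 1 :=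
  fun h ↦ absurd (Nat.le_of_dvd (Nat.pos_of_ne_zero hn) ((generator_pow_eq_one_iff hl).1 h))
    (by lia)

lemma generator_not_isSquare [Finite F] (h2 : (2 : F) ≠ 0) : ¬IsSquare (l : F) := by
  intro hsq
  obtain ⟨a, ha⟩ := FiniteField.exists_nonsquare (F := F)
    fun h ↦ h2 (by simpa [h] using CharP.cast_eq_zero F (ringChar F))
  obtain ⟨n, hn⟩ := hl (Units.mk0 a fun h ↦ ha (h ▸ .zero))
  have : a = (l : F) ^ n := by simpa using (congrArg Units.val hn).symm
  exact ha (this ▸ hsq.zpow n)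

lemma diag2_mem_of_generator (hM : diag2 (l : F) l.ne_zero ∈ M) (x : F) (hx : x ≠ 0) :
    diag2 x hx ∈ M := by
  let d : Fˣ →* SL(2, F) := MonoidHom.mk' (fun y ↦ diag2 (y : F) y.ne_zero) fun y z ↦
    Subtype.ext (by simp [Matrix.SpecialLinearGroup.diag2_coe', mul_comm])
  obtain ⟨n, hn⟩ := hl (Units.mk0 x hx)
  have : diag2 x hx = d l ^ n := by
    rw [← map_zpow, show l ^ n = Units.mk0 x hx from hn]
    rfl
  exact this ▸ zpow_mem hM n

lemma closure_diag2_eq_top [Finite F] (hl2 : (l : F) ^ 2 ≠ 1) {X g k : SL(2, F)}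
    (hg : g ∈ Subgroup.closure {diag2 (l : F) l.ne_zero, X})
    (hk : k ∈ Subgroup.closure {diag2 (l : F) l.ne_zero, X}) {n : F} (hn : n ≠ 0)
    (h0 : n ^ 2 * (g.1 0 0 * k.1 0 0) + g.1 0 1 * k.1 1 0 = 0)
    (h1 : 1 + g.1 0 1 * g.1 1 0 + k.1 0 1 * k.1 1 0 ≠ 0) :
    Subgroup.closure {diag2 (l : F) l.ne_zero, X} = ⊤ :=
  eq_top_of_mul_diag2_mul_upper_left_eq_zero (diag2_mem_of_generator hl
    (Subgroup.subset_closure (Set.mem_insert _ _))) l.ne_zero hl2 hg hk hn h0 h1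

end Generator

end Generation

section Unliftable

open Matrix.SpecialLinearGroup (diag2)

/-- A generating pair `(u, v)` of `H` is unliftable if no homomorphism `C₂ ∗ C₃ → H` maps a
generating pair of `C₂ ∗ C₃` to it. -/
def IsUnliftablePair {H : Type*} [Group H] (u v : H) : Prop :=
  Subgroup.closure {u, v} = ⊤ ∧
    ∀ (θ : Monoid.Coprod (Cyc 2) (Cyc 3) →* H) (g₁ g₂ : Monoid.Coprod (Cyc 2) (Cyc 3)),
      Subgroup.closure {g₁, g₂} = ⊤ → (θ g₁, θ g₂) ≠ (u, v)

variable {F : Type*} [Field F]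

lemma isUnliftablePair_of_not_isSquare {X Y : SL(2, F)} (h : Subgroup.closure {X, Y} = ⊤)
    (hXY : commTrace X Y ≠ 2) (hsq : ¬IsSquare (commTrace X Y + 1)) :
    IsUnliftablePair (X : PSL(2, F)) (Y : PSL(2, F)) :=
  ⟨closure_mk_pair_eq_top h, fun _ _ _ hg hθ ↦ hsq <| isSquare_commTrace_add_one_of_lift hg
    (congrArg Prod.fst hθ) (congrArg Prod.snd hθ) hXY⟩

lemma isUnliftablePair_of_trace_notMem_range {X Y : SL(2, F)} (h : Subgroup.closure {X, Y} = ⊤)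
    (hXY : commTrace X Y ≠ 2) (hXY' : commTrace X Y = -1) {Z : SL(2, F)}
    (hZ : Z.1.trace ∉ (Int.castRingHom F).range) :
    IsUnliftablePair (X : PSL(2, F)) (Y : PSL(2, F)) := by
  refine ⟨closure_mk_pair_eq_top h, fun θ g₁ g₂ hg hθ ↦ ?_⟩
  have h₁ : θ g₁ = X := congrArg Prod.fst hθ
  have h₂ : θ g₂ = Y := congrArg Prod.snd hθ
  obtain ⟨g, -, hg'⟩ := exists_mem_closure_map_eq (φ := QuotientGroup.mk' _) (π := θ) h h₁ h₂ Z
  exact hZ (trace_mem_range_intCast_of_lift hg h₁ h₂ hXY hXY' g hg')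

lemma exists_add_sq_not_isSquare [Finite F] (h2 : (2 : F) ≠ 0) {k : F} (hk : k ≠ 0)
    (hk' : k ≠ -1) : ∃ y ≠ 0, ¬IsSquare (k + y ^ 2) := by
  by_contra! h
  -- If `k + y ^ 2 = r ^ 2`, factor `k = (r - y) * (r + y)` and put `x = r - y`.
  have hroot (y : Fˣ) : ∃ x : Fˣ, 2 * (y : F) = k / x - x := by
    obtain ⟨r, hr⟩ := h y y.ne_zero
    have hx : r - y ≠ 0 := fun h0 ↦ hk (by linear_combination hr + (r + y) * h0)
    exact ⟨Units.mk0 _ hx, by rw [Units.val_mk0, eq_sub_iff_add_eq, eq_div_iff hx]; grind⟩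
  choose f hf using hroot
  have hinj : Function.Injective f := fun y z hyz ↦
    Units.ext (mul_left_cancel₀ h2 (by rw [hf, hf, hyz]))
  -- The values `x = 1` and `x = -k` come from the same `y`, although `1 ≠ -k`.
  obtain ⟨y, hy⟩ := Finite.surjective_of_injective hinj 1
  obtain ⟨z, hz⟩ := Finite.surjective_of_injective hinj (-Units.mk0 k hk)
  have hyz : y = z := by
    refine Units.ext (mul_left_cancel₀ h2 ?_)
    rw [hf, hf, hy, hz, Units.val_one, Units.val_neg, Units.val_mk0, div_neg, div_self hk]
    ring
  rw [← hyz, hy, ← Units.val_inj, Units.val_one, Units.val_neg, Units.val_mk0] at hz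
  exact hk' (neg_eq_iff_eq_neg.1 hz.symm)

lemma exists_not_isSquare_and_add_one {x : F} (hx : ¬IsSquare x) (hx' : x ≠ -1) :
    ∃ y : F, ¬IsSquare y ∧ ¬IsSquare (y + 1) := by
  by_cases h : IsSquare (x + 1)
  · have hx0 : x ≠ 0 := fun h0 ↦ hx (h0 ▸ .zero)
    refine ⟨x⁻¹, by rwa [isSquare_inv], fun hsq ↦ hx ?_⟩
    rw [show x = (x + 1) / (x⁻¹ + 1) by grind]
    exact h.div hsq
  · exact ⟨x, hx, h⟩

lemma notMem_range_intCast_of_two_eq_zero (h2 : (2 : F) = 0) {x : F} (hx0 : x ≠ 0) (hx1 : x ≠ 1) :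
    x ∉ (Int.castRingHom F).range := by
  rintro ⟨n, rfl⟩
  obtain ⟨k, rfl | rfl⟩ := Int.even_or_odd' n <;> simp [h2] at hx0 hx1

/-- A parabolic element of `SL(2, F)` fixing the vector `(1, s)`; with a torus generator it gives
pairs of prescribed commutator trace. -/
def parabolic (s : F) : SL(2, F) :=
  ⟨!![1 - s, 1; -s ^ 2, 1 + s], by rw [det_fin_two_of]; ring⟩

lemma commTrace_diag2_parabolic {l : F} (hl : l ≠ 0) (s : F) :
    commTrace (diag2 l hl) (parabolic s) = 2 + (s * (l - l⁻¹)) ^ 2 := by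
  rw [commTrace_diag2]
  simp [parabolic]
  ring

variable {l : Fˣ} (hl : ∀ x : Fˣ, x ∈ Subgroup.zpowers l)
include hl

lemma closure_diag2_parabolic_eq_top [Finite F] (hl2 : (l : F) ^ 2 ≠ 1) (h3 : (3 : F) ≠ 0) {s : F}
    (hs0 : s ≠ 0) (hs1 : s ≠ 1) :
    Subgroup.closure {diag2 (l : F) l.ne_zero, parabolic s} = ⊤ := by
  have hX : parabolic s ∈ Subgroup.closure {diag2 (l : F) l.ne_zero, parabolic s} :=
    Subgroup.subset_closure (Set.mem_insert_of_mem _ rfl)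
  by_cases hs : 2 * s ^ 2 = 1
  · have h2 : (2 : F) ≠ 0 := left_ne_zero_of_mul_eq_one hs
    have h2s : 1 - 2 * s ≠ 0 := fun h ↦ hs1 (by linear_combination s * h + hs)
    have hX2 : (parabolic s ^ 2).1 = !![1 - 2 * s, 2; -2 * s ^ 2, 1 + 2 * s] := by
      rw [pow_two, Matrix.SpecialLinearGroup.coe_mul, parabolic, mul_fin_two]
      ext i j
      fin_cases i <;> fin_cases j <;> simp <;> ring
    refine closure_diag2_eq_top hl hl2 (pow_mem hX 2) (pow_mem hX 2)
      (div_ne_zero (mul_ne_zero h2 hs0) h2s) ?_ ?_ <;> simp [hX2] <;> grind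
  · have hs1' : 1 - s ≠ 0 := sub_ne_zero.2 hs1.symm
    refine closure_diag2_eq_top hl hl2 hX hX (div_ne_zero hs0 hs1') ?_ ?_ <;>
      simp [parabolic] <;> grind

lemma closure_diag2_eq_top_of_not_isSquare [Finite F] (hl2 : (l : F) ^ 2 ≠ 1) (h3 : (3 : F) = 0)
    {n : F} (hn : ¬IsSquare n) (hn1 : ¬IsSquare (n + 1)) {X : SL(2, F)}
    (hX : X.1 = !![1, -(n + 1); 1, -n]) :
    Subgroup.closure {diag2 (l : F) l.ne_zero, X} = ⊤ := by
  have hXM : X ∈ Subgroup.closure {diag2 (l : F) l.ne_zero, X} :=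
    Subgroup.subset_closure (Set.mem_insert_of_mem _ rfl)
  have hn0 : n ≠ 0 := fun h ↦ hn (h ▸ .zero)
  have hn10 : n + 1 ≠ 0 := fun h ↦ hn1 (h ▸ .zero)
  obtain ⟨m, hm⟩ := isSquare_mul_of_not_isSquare hn1 hn
  refine closure_diag2_eq_top hl hl2 hXM (inv_mem hXM) (n := m / n) (by grind) ?_ ?_
  · simp [Matrix.SpecialLinearGroup.coe_inv, adjugate_fin_two, hX]
    grind
  · intro h
    simp [Matrix.SpecialLinearGroup.coe_inv, adjugate_fin_two, hX] at h
    exact hn ⟨1, by grind⟩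

lemma exists_isUnliftablePair_of_three_ne_zero [Finite F] (h2 : (2 : F) ≠ 0) (h3 : (3 : F) ≠ 0)
    (hl2 : (l : F) ^ 2 ≠ 1) :
    ∃ u v : PSL(2, F), IsUnliftablePair u v := by
  have hw : (l : F) - (l : F)⁻¹ ≠ 0 := sub_inv_ne_zero l.ne_zero hl2
  obtain ⟨y, hy0, hy⟩ := exists_add_sq_not_isSquare h2 h3
    (fun h ↦ mul_ne_zero h2 h2 (by linear_combination h))
  obtain ⟨s, hs1, hs⟩ : ∃ s : F, s ≠ 1 ∧ (s * ((l : F) - (l : F)⁻¹)) ^ 2 = y ^ 2 := by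
    by_cases h : y / ((l : F) - (l : F)⁻¹) = 1
    · refine ⟨-1, fun h' ↦ h2 (by linear_combination -h'), ?_⟩
      rw [div_eq_one_iff_eq hw] at h
      rw [h, neg_one_mul, neg_sq]
    · exact ⟨_, h, by rw [div_mul_cancel₀ y hw]⟩
  have hs0 : s ≠ 0 := by
    rintro rfl
    exact pow_ne_zero 2 hy0 (by rw [← hs]; ring)
  have hcomm := (commTrace_diag2_parabolic l.ne_zero s).trans (congrArg (2 + ·) hs)
  refine ⟨_, _, isUnliftablePair_of_not_isSquare
    (closure_diag2_parabolic_eq_top hl hl2 h3 hs0 hs1) ?_ ?_⟩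
  · simp [hcomm, hy0]
  · rwa [hcomm, show 2 + y ^ 2 + 1 = 3 + y ^ 2 by ring]

lemma exists_isUnliftablePair_of_three_eq_zero [Finite F] (h3 : (3 : F) = 0)
    (hl2 : (l : F) ^ 2 ≠ 1) : ∃ u v : PSL(2, F), IsUnliftablePair u v := by
  have hw : (l : F) - (l : F)⁻¹ ≠ 0 := sub_inv_ne_zero l.ne_zero hl2
  have h2 : (2 : F) ≠ 0 := fun h ↦ one_ne_zero (α := F) (by linear_combination h3 - h)
  obtain ⟨n, hn, hn1⟩ := exists_not_isSquare_and_add_one (generator_not_isSquare hl h2)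
    (fun h ↦ hl2 (by rw [h]; ring))
  obtain ⟨X, hX⟩ : ∃ X : SL(2, F), X.1 = !![1, -(n + 1); 1, -n] :=
    ⟨⟨_, by rw [det_fin_two_of]; ring⟩, rfl⟩
  have hcomm : commTrace (diag2 (l : F) l.ne_zero) X = 2 + (n + 1) * ((l : F) - (l : F)⁻¹) ^ 2 := by
    rw [commTrace_diag2]
    simp [hX]
    ring
  refine ⟨_, _, isUnliftablePair_of_not_isSquare
    (closure_diag2_eq_top_of_not_isSquare hl hl2 h3 hn hn1 hX) ?_ ?_⟩
  · have hn10 : n + 1 ≠ 0 := fun h ↦ hn1 (h ▸ .zero)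
    simp [hcomm, hw, hn10]
  · rintro ⟨r, hr⟩
    refine hn1 ⟨r / ((l : F) - (l : F)⁻¹), ?_⟩
    rw [hcomm] at hr
    grind

lemma exists_isUnliftablePair_of_two_eq_zero [Finite F] (h2 : (2 : F) = 0)
    (hl2 : (l : F) ^ 2 ≠ 1) (hl3 : (l : F) ^ 3 ≠ 1) : ∃ u v : PSL(2, F), IsUnliftablePair u v := by
  have hl0 : (l : F) ≠ 0 := l.ne_zero
  have h3 : (3 : F) = 1 := by linear_combination h2
  have hw : (l : F) - (l : F)⁻¹ ≠ 0 := sub_inv_ne_zero l.ne_zero hl2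
  have hs1 : ((l : F) - (l : F)⁻¹)⁻¹ ≠ 1 := by grind
  have hcomm := commTrace_diag2_parabolic l.ne_zero ((l : F) - (l : F)⁻¹)⁻¹
  rw [inv_mul_cancel₀ hw] at hcomm
  refine ⟨_, _, isUnliftablePair_of_trace_notMem_range
    (closure_diag2_parabolic_eq_top hl hl2 (h3 ▸ one_ne_zero) (inv_ne_zero hw) hs1) ?_ ?_
    (Z := diag2 (l : F) l.ne_zero) (notMem_range_intCast_of_two_eq_zero h2 ?_ ?_)⟩
  · simp [hcomm]
  · linear_combination hcomm + 2 * h2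
  · simp [Matrix.SpecialLinearGroup.diag2_coe', trace_fin_two]
    grind
  · simp [Matrix.SpecialLinearGroup.diag2_coe', trace_fin_two]
    grind

lemma exists_isUnliftablePair_of_pow_three_eq_one [Finite F] (h2 : (2 : F) = 0)
    (hl1 : (l : F) ≠ 1) (hl3 : (l : F) ^ 3 = 1) : ∃ u v : PSL(2, F), IsUnliftablePair u v := by
  have hl0 : (l : F) ≠ 0 := l.ne_zero
  have hl2 : (l : F) ^ 2 ≠ 1 := by grind
  obtain ⟨X, hX⟩ : ∃ X : SL(2, F), X.1 = !![0, 1; 1, (l : F)] :=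
    ⟨⟨_, by rw [det_fin_two_of]; linear_combination -h2⟩, rfl⟩
  have hgen : Subgroup.closure {diag2 (l : F) l.ne_zero, X} = ⊤ :=
    eq_top_of_upper_left_eq_zero (diag2_mem_of_generator hl
      (Subgroup.subset_closure (Set.mem_insert _ _))) l.ne_zero hl2
      (Subgroup.subset_closure (Set.mem_insert_of_mem _ rfl)) (by simp [hX]) (by simp [hX])
  have hcomm : commTrace (diag2 (l : F) l.ne_zero) X = -1 := by
    simp [commTrace_diag2, hX]
    grind
  refine ⟨_, _, isUnliftablePair_of_trace_notMem_range hgen ?_ hcomm (Z := X)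
    (notMem_range_intCast_of_two_eq_zero h2 ?_ ?_)⟩
  · simp [hcomm, h2]
  · simp [hX, trace_fin_two]
  · simpa [hX, trace_fin_two] using hl1

omit hl in
theorem exists_isUnliftablePair [Finite F] (hF : 4 ≤ Nat.card F) :
    ∃ u v : PSL(2, F), IsUnliftablePair u v := by
  obtain ⟨l, hl⟩ := IsCyclic.exists_generator (α := Fˣ)
  have hl2 : (l : F) ^ 2 ≠ 1 := generator_pow_ne_one hl two_ne_zero hF
  by_cases h2 : (2 : F) = 0
  · obtain hF4 | hF4 := hF.eq_or_lt
    · exact exists_isUnliftablePair_of_pow_three_eq_one hl h2 (fun h ↦ hl2 (by rw [h, one_pow]))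
        ((generator_pow_eq_one_iff hl).2 (by rw [← hF4]))
    · exact exists_isUnliftablePair_of_two_eq_zero hl h2 hl2
        (generator_pow_ne_one hl three_ne_zero hF4)
  by_cases h3 : (3 : F) = 0
  · exact exists_isUnliftablePair_of_three_eq_zero hl h3 hl2
  · exact exists_isUnliftablePair_of_three_ne_zero hl h2 h3 hl2

end Unliftable

section Surjection

open Matrix.SpecialLinearGroup (diag2)

lemma exists_surjective_of_closure_eq_top {R : Type*} [CommRing R] {A B : SL(2, R)}
    (hA : A.1.trace = 0) (hB : B.1.trace = 1) (h : Subgroup.closure {A, B} = ⊤) :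
    ∃ φ : Monoid.Coprod (Cyc 2) (Cyc 3) →* PSL(2, R), Function.Surjective φ := by
  obtain ⟨φ, hφA, hφB⟩ := exists_hom_of_trace hA hB
  refine ⟨φ, MonoidHom.range_eq_top.1 (top_unique ?_)⟩
  rw [← closure_mk_pair_eq_top h, Subgroup.closure_le, Set.pair_subset_iff]
  exact ⟨⟨_, hφA⟩, ⟨_, hφB⟩⟩

variable {F : Type*} [Field F]

lemma upper_mem_of_prime_card (hF : (Nat.card F).Prime) {M : Subgroup SL(2, F)}
    (h : upper 1 ∈ M) (x : F) : upper x ∈ M := by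
  have := Fact.mk hF
  let u : Multiplicative F →* SL(2, F) :=
    MonoidHom.mk' (fun y ↦ upper y.toAdd) fun y z ↦ upper_add y.toAdd z.toAdd
  obtain ⟨n, hn⟩ := mem_zmultiples_of_prime_card (p := Nat.card F) rfl one_ne_zero (g' := x)
  have hx : upper x = upper 1 ^ n := by
    rw [← hn]
    exact map_zpow u (Multiplicative.ofAdd 1) n
  exact hx ▸ zpow_mem h n

lemma exists_surjective_of_prime_card (hF : (Nat.card F).Prime) :
    ∃ φ : Monoid.Coprod (Cyc 2) (Cyc 3) →* PSL(2, F), Function.Surjective φ := by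
  obtain ⟨A, hA⟩ : ∃ A : SL(2, F), A.1 = !![0, 1; -1, 0] :=
    ⟨⟨_, by rw [det_fin_two_of]; ring⟩, rfl⟩
  obtain ⟨B, hB⟩ : ∃ B : SL(2, F), B.1 = !![0, -1; 1, 1] :=
    ⟨⟨_, by rw [det_fin_two_of]; ring⟩, rfl⟩
  have hAB : A * B = upper 1 := by
    refine Subtype.ext ?_
    rw [Matrix.SpecialLinearGroup.coe_mul, hA, hB, coe_upper, mul_fin_two]
    simp
  have hAM : A ∈ Subgroup.closure {A, B} := Subgroup.subset_closure (Set.mem_insert _ _)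
  have hBM : B ∈ Subgroup.closure {A, B} := Subgroup.subset_closure (Set.mem_insert_of_mem _ rfl)
  refine exists_surjective_of_closure_eq_top (A := A) (B := B) (by simp [hA, trace_fin_two])
    (by simp [hB, trace_fin_two]) (eq_top_of_upper_mem (g := A) ?_ hAM (by simp [hA]))
  exact upper_mem_of_prime_card hF (hAB ▸ mul_mem hAM hBM)

/-- The trace zero element `A` of `SL(2, F)` such that `A⁻¹ * diag(l, l⁻¹)` has trace one when
`w = l - l⁻¹`, so that projectively `diag(l, l⁻¹)` is an involution times an element of order
three. -/
def torusInvolution {w : F} (hw0 : w ≠ 0) : SL(2, F) :=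
  ⟨!![-w⁻¹, -((1 + w ^ 2) * w⁻¹); w⁻¹, w⁻¹], by rw [det_fin_two_of]; field⟩

lemma coe_torusInvolution {w : F} (hw0 : w ≠ 0) :
    (torusInvolution hw0).1 = !![-w⁻¹, -((1 + w ^ 2) * w⁻¹); w⁻¹, w⁻¹] := rfl

lemma eq_top_of_torusInvolution_mem_of_not_isSquare [Finite F] {M : Subgroup SL(2, F)}
    (hD : ∀ (x : F) (hx : x ≠ 0), diag2 x hx ∈ M) {l : F} (hl : l ≠ 0) (h4 : l ^ 4 ≠ 1)
    (h10 : l ^ 10 ≠ 1) (h12 : l ^ 12 ≠ 1) {w : F} (hw0 : w ≠ 0) (hw : w = l - l⁻¹)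
    (hAM : torusInvolution hw0 ∈ M) (hsq : ¬IsSquare (1 + w ^ 2)) : M = ⊤ := by
  have h2 : l ^ 2 ≠ 1 := fun h ↦ h4 (by linear_combination (l ^ 2 + 1) * h)
  have hA := coe_torusInvolution hw0
  set A := torusInvolution hw0
  have he : 1 + w ^ 2 ≠ 0 := fun h ↦ hsq (h ▸ .zero)
  obtain ⟨k, hk, hkA⟩ := exists_mul_diag2_mul_mem hD hAM hAM (pow_ne_zero 2 hl)
  have hlw : l * w = l ^ 2 - 1 := by rw [hw]; field
  have hbc : A.1 0 1 * A.1 1 0 = -(1 + w ^ 2) / w ^ 2 := by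
    simp [hA]
    field
  have hk00 : k.1 0 0 = (l ^ 2 * l ^ 2 - (1 + w ^ 2)) / (l * w) ^ 2 := by
    simp [hkA, hA]
    field
  have hk10 : k.1 1 0 = -(l + l⁻¹) / w := by
    simp [hkA, hA]
    field_simp
    linear_combination (l ^ 2 + 1) * hlw
  have hk01 : k.1 0 1 = (1 + w ^ 2) * (l + l⁻¹) / w := by
    simp [hkA, hA]
    field_simp
    linear_combination -(l ^ 2 + 1) * hlw
  refine eq_top_of_not_isSquare hD hl h2 hAM hk (fun h ↦ hsq ?_) ?_ ?_ ?_ ?_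
  · have hprod : (1 + w ^ 2) =
        A.1 0 0 * A.1 0 1 * A.1 1 0 * A.1 1 1 * (w ^ 2 * w ^ 2) := by
      simp [hA]
      field
    exact hprod ▸ h.mul (.mul_self _)
  · rw [hk00]
    refine div_ne_zero (sub_ne_zero.2 fun h ↦ hsq ⟨_, h.symm⟩) (pow_ne_zero 2 (mul_ne_zero hl hw0))
  · rw [hk10]
    refine div_ne_zero (neg_ne_zero.2 fun h ↦ h4 ?_) hw0
    field_simp at h
    linear_combination (l ^ 2 - 1) * h
  · rw [hbc, hk01, hk10, hw]
    rw [hw] at hw0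
    intro h
    field_simp at h
    refine h10 ?_
    linear_combination (1 - l ^ 2) * h
  · rw [hbc, hk01, hk10]
    intro h
    field_simp at h
    refine h12 ?_
    linear_combination (l ^ 2 - 1) * (l ^ 6 + 1) * h

lemma eq_top_of_torusInvolution_mem [Finite F] {M : Subgroup SL(2, F)}
    (hD : ∀ (x : F) (hx : x ≠ 0), diag2 x hx ∈ M) {l : F} (hl : l ≠ 0) (h8 : l ^ 8 ≠ 1)
    (h10 : l ^ 10 ≠ 1) (h12 : l ^ 12 ≠ 1) {w : F} (hw0 : w ≠ 0) (hw : w = l - l⁻¹)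
    (hAM : torusInvolution hw0 ∈ M) : M = ⊤ := by
  have h4 : l ^ 4 ≠ 1 := fun h ↦ h8 (by linear_combination (l ^ 4 + 1) * h)
  by_cases hsq : IsSquare (1 + w ^ 2)
  · have h2 : l ^ 2 ≠ 1 := fun h ↦ h4 (by linear_combination (l ^ 2 + 1) * h)
    obtain ⟨n, hn⟩ := hsq
    refine eq_top_of_mul_diag2_mul_upper_left_eq_zero hD hl h2 hAM hAM (n := n) ?_ ?_ ?_
    · rintro rfl
      rw [hw] at hn
      field_simp at hn
      exact h12 (by linear_combination (l ^ 2 + 1) * (l ^ 6 - 1) * hn)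
    · simp [coe_torusInvolution]
      linear_combination -w⁻¹ ^ 2 * hn
    · intro h
      have hw2 : w ^ 2 + 2 = 0 := by
        simp [coe_torusInvolution] at h
        field_simp at h
        linear_combination -h
      rw [hw] at hw2
      field_simp at hw2
      exact h8 (by linear_combination (l ^ 4 - 1) * hw2)
  · exact eq_top_of_torusInvolution_mem_of_not_isSquare hD hl h4 h10 h12 hw0 hw hAM hsq

lemma exists_surjective_of_generator [Finite F] {l : Fˣ} (hl : ∀ x : Fˣ, x ∈ Subgroup.zpowers l)
    (h8 : (l : F) ^ 8 ≠ 1) (h10 : (l : F) ^ 10 ≠ 1) (h12 : (l : F) ^ 12 ≠ 1) :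
    ∃ φ : Monoid.Coprod (Cyc 2) (Cyc 3) →* PSL(2, F), Function.Surjective φ := by
  have hw0 : (l : F) - (l : F)⁻¹ ≠ 0 := sub_inv_ne_zero l.ne_zero fun h ↦
    h8 (by linear_combination ((l : F) ^ 6 + (l : F) ^ 4 + (l : F) ^ 2 + 1) * h)
  generalize hw : (l : F) - (l : F)⁻¹ = w at hw0
  have hA := coe_torusInvolution hw0
  set A := torusInvolution hw0
  set D := diag2 (l : F) l.ne_zero with hD
  have hAM : A ∈ Subgroup.closure {A, A⁻¹ * D} := Subgroup.subset_closure (Set.mem_insert _ _)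
  have hDM : D ∈ Subgroup.closure {A, A⁻¹ * D} := by
    simpa only [mul_inv_cancel_left] using
      mul_mem hAM (Subgroup.subset_closure (Set.mem_insert_of_mem _ rfl))
  refine exists_surjective_of_closure_eq_top (A := A) (B := A⁻¹ * D) ?_ ?_
    (eq_top_of_torusInvolution_mem (diag2_mem_of_generator hl hDM) l.ne_zero h8 h10 h12 hw0
      hw.symm hAM)
  · simp [hA, trace_fin_two]
  · rw [Matrix.SpecialLinearGroup.coe_mul, Matrix.SpecialLinearGroup.coe_inv, hA, hD,
      Matrix.SpecialLinearGroup.diag2_coe', adjugate_fin_two_of, mul_fin_two, trace_fin_two_of]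
    simp
    linear_combination w⁻¹ * hw + inv_mul_cancel₀ hw0

lemma exists_surjective_of_pow_three_eq_one [Finite F] {l : Fˣ}
    (hl : ∀ x : Fˣ, x ∈ Subgroup.zpowers l) (h2 : (2 : F) = 0) (hl1 : (l : F) ≠ 1)
    (hl3 : (l : F) ^ 3 = 1) :
    ∃ φ : Monoid.Coprod (Cyc 2) (Cyc 3) →* PSL(2, F), Function.Surjective φ := by
  have hl0 : (l : F) ≠ 0 := l.ne_zero
  have hroot : (l : F) ^ 2 + l + 1 = 0 := by grind
  obtain ⟨A, hA⟩ : ∃ A : SL(2, F), A.1 = !![(l : F), (l : F); 1, (l : F)] :=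
    ⟨⟨_, by rw [det_fin_two_of]; grind⟩, rfl⟩
  have hAM : A ∈ Subgroup.closure {diag2 (l : F) l.ne_zero, A} :=
    Subgroup.subset_closure (Set.mem_insert_of_mem _ rfl)
  refine exists_surjective_of_closure_eq_top (A := A) (B := diag2 (l : F) l.ne_zero) ?_ ?_ ?_
  · simp [hA, trace_fin_two]
    grind
  · simp [Matrix.SpecialLinearGroup.diag2_coe', trace_fin_two]
    grind
  · rw [Set.pair_comm]
    refine closure_diag2_eq_top hl (by grind) hAM hAM hl0 ?_ ?_ <;> simp [hA] <;> grind

lemma not_dvd_of_isPrimePow {q : ℕ} (hq : IsPrimePow q) (hprime : ¬q.Prime) (h4 : q ≠ 4)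
    (h9 : q ≠ 9) : ¬q - 1 ∣ 8 ∧ ¬q - 1 ∣ 10 ∧ ¬q - 1 ∣ 12 := by
  obtain hq13 | hq13 := le_or_gt q 13
  · have h6 : q ≠ 6 := fun h ↦ absurd (h ▸ hq) (by decide)
    have h2 := hq.two_le
    interval_cases q <;> norm_num at *
  · exact ⟨Nat.not_dvd_of_pos_of_lt (by lia) (by lia), Nat.not_dvd_of_pos_of_lt (by lia) (by lia),
      Nat.not_dvd_of_pos_of_lt (by lia) (by lia)⟩

theorem exists_surjective [Finite F] (h9 : Nat.card F ≠ 9) :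
    ∃ φ : Monoid.Coprod (Cyc 2) (Cyc 3) →* PSL(2, F), Function.Surjective φ := by
  have := Fintype.ofFinite F
  by_cases hprime : (Nat.card F).Prime
  · exact exists_surjective_of_prime_card hprime
  obtain ⟨l, hl⟩ := IsCyclic.exists_generator (α := Fˣ)
  by_cases hq : Nat.card F = 4
  · refine exists_surjective_of_pow_three_eq_one hl ?_ ?_ ?_
    · have hcast : ((Nat.card F : ℕ) : F) = 0 := by simp
      rw [hq] at hcast
      exact pow_eq_zero_iff two_ne_zero |>.1 (by linear_combination hcast)
    · simpa using generator_pow_ne_one hl one_ne_zero (by lia)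
    · exact (generator_pow_eq_one_iff hl).2 (by rw [hq])
  · have hcard := FiniteField.isPrimePow_card F
    rw [← Nat.card_eq_fintype_card] at hcard
    have hdvd := not_dvd_of_isPrimePow hcard hprime hq h9
    simp only [← generator_pow_eq_one_iff hl] at hdvd
    exact exists_surjective_of_generator hl hdvd.1 hdvd.2.1 hdvd.2.2

end Surjection

/-- for `G = C_2 ∗ C_3` and `H = PSL(2,q)` with `q ≥ 4`, `q ≠ 9`,
the group `H` is a homomorphic image of `G`, and some generating pair of `H`
does not lift to a generating pair of `G` along any homomorphism `G → H`. -/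
theorem stmt0 (q : ℕ) (F : Type) [Field F] [Fintype F] (hcard : Fintype.card F = q)
    (hq4 : 4 ≤ q) (hq9 : q ≠ 9) :
    (∃ φ : Monoid.Coprod (Cyc 2) (Cyc 3) →* PSL2 F, Function.Surjective φ) ∧
    ∃ h1 h2 : PSL2 F, Subgroup.closure {h1, h2} = ⊤ ∧
      ∀ (θ : Monoid.Coprod (Cyc 2) (Cyc 3) →* PSL2 F)
        (g1 g2 : Monoid.Coprod (Cyc 2) (Cyc 3)),
        Subgroup.closure {g1, g2} = ⊤ → (θ g1, θ g2) ≠ (h1, h2) := by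
  subst hcard
  rw [← Nat.card_eq_fintype_card] at hq4 hq9
  exact ⟨exists_surjective hq9, exists_isUnliftablePair hq4⟩
end

section
/- Let m be a positive integer and q = p^k a power of a prime p with q ≡ 3 (mod 4) and q ≠ 3, and suppose that p divides m, or gcd(m,(q+1)/2) ≥ 3, or gcd(m,(q−1)/2) ≥ 3. Set G = C_2 ∗ C_m and H = PSL(2,q). Then H is a homomorphic image of G (there is a surjective group homomorphism G → H), and there exists a generating pair (h1,h2) of H such that for every group homomorphism θ : G → H and every generating pair (g1,g2) of G one has (θ(g1), θ(g2)) ≠ (h1,h2). -/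
/-!
For surjectivity, `H` is generated by the classes of some `A`, `B` in `SL(2, q)` with `tr A = 0` and
any prescribed `tr B = y ≠ 0`. The arithmetic hypothesis on `m` is what provides such a `y` for
which `X² - yX + 1` divides some `Xᵐ - ε`, and then `B ^ m` is scalar.

The generating pair which does not lift consists of the classes of matrices `M`, `N` of nonzero
trace with `det (MN - NM) = 4`. If `θ` maps a generating pair of `C₂ ∗ C_m` to it, then `θ` sends
the generators of the two factors to classes of matrices with traces `0` and `2τ`, whose product has
some trace `2w`. Replacing `w` by an indeterminate `x` lifts `θ` to a map into the norm-one units,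
modulo scalars, of a quaternion algebra over `F[x]`. There the generating pair lifts to a pair
generating the whole algebra, so the index relating the commutator of that pair to the commutator of
the standard generators is a unit of `F[x]`, that is, a constant `e`, and `det (MN - NM) = 4`
becomes `(τ² + w² - 1) e = -1`. At `x = 0` the generators are homogeneous for a `ℤ/2`-grading of the
algebra, which forces `e = d²` and `a² - (τ² - 1) d² = 1` for some `a`, `d`. Adding up,
`a² + (wd)² = 0`; as `-1` is not a square, `w = 0`, and there the grading makes one of the two
traces vanish.
-/

open Matrix Matrix.SpecialLinearGroup Polynomial
open scoped Finset MatrixGroups Quaternion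

section MatricesOf

variable {R : Type*} [CommRing R]

/-- The monoid of matrices underlying the elements of a subgroup of `SL(2, R)`, so that membership
of a matrix given by its four entries can be stated without carrying its determinant along. -/
def matricesOf (S : Subgroup SL(2, R)) : Submonoid (Matrix (Fin 2) (Fin 2) R) :=
  S.toSubmonoid.map coeMonoidHom

variable {S : Subgroup SL(2, R)}

lemma coe_mem_matricesOf {M : SL(2, R)} : (M : Matrix (Fin 2) (Fin 2) R) ∈ matricesOf S ↔ M ∈ S :=
  Submonoid.mem_map_iff_mem coeMonoidHom_injective

lemma det_of_mem_matricesOf {a b c d : R} (h : !![a, b; c, d] ∈ matricesOf S) :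
    a * d - b * c = 1 := by
  obtain ⟨M, -, hM⟩ := h
  rw [← det_fin_two_of, ← hM]
  exact M.2

lemma mul_mem_matricesOf {a b c d a' b' c' d' x y z w : R} (h : !![a, b; c, d] ∈ matricesOf S)
    (h' : !![a', b'; c', d'] ∈ matricesOf S)
    (hx : x = a * a' + b * c') (hy : y = a * b' + b * d')
    (hz : z = c * a' + d * c') (hw : w = c * b' + d * d') : !![x, y; z, w] ∈ matricesOf S := by
  rw [hx, hy, hz, hw, ← mul_fin_two]
  exact mul_mem h h'

lemma inv_mem_matricesOf {a b c d : R} (h : !![a, b; c, d] ∈ matricesOf S) :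
    !![d, -b; -c, a] ∈ matricesOf S := by
  obtain ⟨M, hMS, hM⟩ := h
  refine ⟨M⁻¹, S.inv_mem hMS, ?_⟩
  rw [coeMonoidHom_apply] at hM ⊢
  rw [coe_inv, hM, adjugate_fin_two_of]

lemma left_mem_matricesOf_closure (A B : SL(2, R)) :
    (A : Matrix (Fin 2) (Fin 2) R) ∈ matricesOf (Subgroup.closure {A, B}) :=
  coe_mem_matricesOf.2 (Subgroup.subset_closure (Set.mem_insert A {B}))

lemma right_mem_matricesOf_closure (A B : SL(2, R)) :
    (B : Matrix (Fin 2) (Fin 2) R) ∈ matricesOf (Subgroup.closure {A, B}) :=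
  coe_mem_matricesOf.2 (Subgroup.subset_closure (Set.mem_insert_of_mem A rfl))

end MatricesOf

section Generation

variable {F : Type*} [Field F] {S : Subgroup SL(2, F)}

lemma eq_top_of_upper_mem_of_lower_mem (hU : ∀ t, !![1, t; 0, 1] ∈ matricesOf S)
    (hL : ∀ t, !![1, 0; t, 1] ∈ matricesOf S) : S = ⊤ := by
  refine eq_top_iff.2 fun M _ ↦
    SL2.transvection_induction (· ∈ S) (fun i j hij t ↦ ?_) (fun _ _ ↦ mul_mem) M
  rw [← coe_mem_matricesOf, transvection_coe]
  fin_cases i <;> fin_cases j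
  · exact absurd rfl hij
  · convert hU t using 1
    ext i j; fin_cases i <;> fin_cases j <;> simp
  · convert hL t using 1
    ext i j; fin_cases i <;> fin_cases j <;> simp
  · exact absurd rfl hij

lemma eq_top_of_upper_mem_s2 (hU : ∀ t, !![1, t; 0, 1] ∈ matricesOf S) {a b c d : F}
    (hM : !![a, b; c, d] ∈ matricesOf S) (hc : c ≠ 0) : S = ⊤ := by
  refine eq_top_of_upper_mem_of_lower_mem hU fun t ↦ ?_
  have hdet := det_of_mem_matricesOf hM
  have hg : !![0, -c⁻¹; c, d] ∈ matricesOf S := by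
    refine mul_mem_matricesOf (hU (-a / c)) hM ?_ ?_ ?_ ?_ <;> field_simp <;> grind
  have hgu : !![0, -c⁻¹; c, d - t / c] ∈ matricesOf S := by
    refine mul_mem_matricesOf hg (hU (-t / c ^ 2)) ?_ ?_ ?_ ?_ <;> field_simp <;> ring
  refine mul_mem_matricesOf hgu (inv_mem_matricesOf hg) ?_ ?_ ?_ ?_ <;> field_simp <;> ring

lemma upper_mem_of_torus_mem (h2 : (2 : F) ≠ 0)
    (hD : ∀ x : F, x ≠ 0 → !![x, 0; 0, x⁻¹] ∈ matricesOf S) {x t y : F} (ht : t ≠ 0)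
    (hP : !![x, t; 0, y] ∈ matricesOf S) (u : F) : !![1, u; 0, 1] ∈ matricesOf S := by
  have hxy : x * y = 1 := by simpa using det_of_mem_matricesOf hP
  obtain ⟨hx, hy⟩ := mul_ne_zero_iff.1 (hxy ▸ one_ne_zero)
  have hyx : !![1, y * t; 0, 1] ∈ matricesOf S := by
    refine mul_mem_matricesOf (hD y hy) hP ?_ ?_ ?_ ?_ <;> field_simp <;> grind
  have hsq (h : F) : !![1, h ^ 2 * (y * t); 0, 1] ∈ matricesOf S := by
    obtain rfl | hh := eq_or_ne h 0
    · simp [← one_fin_two]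
    · have hhu : !![h, h * (y * t); 0, h⁻¹] ∈ matricesOf S := by
        refine mul_mem_matricesOf (hD h hh) hyx ?_ ?_ ?_ ?_ <;> ring
      refine mul_mem_matricesOf hhu (hD h⁻¹ (inv_ne_zero hh)) ?_ ?_ ?_ ?_ <;> field_simp <;> ring
  -- every element of `F` is a difference of two squares
  set v := u / (y * t)
  have hv : u = (((v + 1) / 2) ^ 2 - ((v - 1) / 2) ^ 2) * (y * t) := by
    simp only [v]; field_simp; ring
  refine mul_mem_matricesOf (hsq ((v + 1) / 2)) (inv_mem_matricesOf (hsq ((v - 1) / 2)))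
    ?_ ?_ ?_ ?_ <;> grind

lemma upper_mem_of_card_prime [Fintype F] (hF : (Fintype.card F).Prime) {t : F} (ht : t ≠ 0)
    (hP : !![1, t; 0, 1] ∈ matricesOf S) (u : F) : !![1, u; 0, 1] ∈ matricesOf S := by
  have hnat (n : ℕ) : !![1, n * t; 0, 1] ∈ matricesOf S := by
    induction n with
    | zero => simp [← one_fin_two]
    | succ n ih => refine mul_mem_matricesOf ih hP ?_ ?_ ?_ ?_ <;> push_cast <;> ring
  have := Fact.mk hF
  have := charP_of_card_eq_prime (R := F) rfl
  obtain ⟨z, hz⟩ := (ZMod.castHom_bijective F rfl).2 (u / t)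
  have hzu : (z.val : F) * t = u := by
    rw [← eq_div_iff ht, ← hz, ZMod.castHom_apply, ZMod.natCast_val]
  simpa only [hzu] using hnat z.val

lemma torus_mem_of_zpowers_eq_top {v : Fˣ} (hv : ∀ x : Fˣ, x ∈ Subgroup.zpowers v)
    (h : !![(v : F), 0; 0, (v : F)⁻¹] ∈ matricesOf S) (x : F) (hx : x ≠ 0) :
    !![x, 0; 0, x⁻¹] ∈ matricesOf S := by
  suffices ∀ y ∈ Subgroup.zpowers v, !![(y : F), 0; 0, (y : F)⁻¹] ∈ matricesOf S from
    this (Units.mk0 x hx) (hv _)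
  intro y hy
  rw [Subgroup.zpowers_eq_closure] at hy
  induction hy using Subgroup.closure_induction with
  | mem y hy => rwa [Set.mem_singleton_iff.1 hy]
  | one => simp [← one_fin_two]
  | mul y z _ _ ihy ihz =>
    refine mul_mem_matricesOf ihy ihz ?_ ?_ ?_ ?_ <;> push_cast <;> grind
  | inv y _ ih => simpa using inv_mem_matricesOf ih

lemma card_filter_sub_inv_sq_eq_le [Fintype F] [DecidableEq F] {x : F} (hx : x ≠ 0) :
    #{y : F | y ≠ 0 ∧ (y - y⁻¹) ^ 2 = (x - x⁻¹) ^ 2} ≤ 4 := by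
  refine (Finset.card_le_card fun y hy ↦ ?_).trans (Finset.card_le_four (a := x) (b := -x)
    (c := x⁻¹) (d := -x⁻¹))
  obtain ⟨hy0, hy⟩ := (Finset.mem_filter.1 hy).2
  have : (y - x) * (y + x) * (y * x - 1) * (y * x + 1) = 0 := by field_simp at hy; grind
  simp only [Finset.mem_insert, Finset.mem_singleton]
  grind

lemma exists_quadraticChar_eq_of_card_ge [Fintype F] [DecidableEq F] (hF : 16 ≤ Fintype.card F)
    (f : F → F) : ∃ x y : F, x ≠ 0 ∧ y ≠ 0 ∧ x ^ 2 ≠ 1 ∧ y ^ 2 ≠ 1 ∧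
      (x - x⁻¹) ^ 2 ≠ (y - y⁻¹) ^ 2 ∧ quadraticChar F (f x) = quadraticChar F (f y) := by
  have hcard : #({0, 1, -1} : Finset ℤ) * 4 < #({0, 1, -1}ᶜ : Finset F) := by
    have hF3 := Finset.card_le_three (a := (0 : F)) (b := 1) (c := -1)
    have hZ3 : #({0, 1, -1} : Finset ℤ) = 3 := rfl
    rw [Finset.card_compl]
    omega
  have hmaps (x : F) : quadraticChar F (f x) ∈ ({0, 1, -1} : Finset ℤ) := by
    by_cases h : f x = 0
    · simp [h]
    · simpa using Or.inr (quadraticChar_dichotomy h)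
  obtain ⟨ε, -, hε⟩ := Finset.exists_lt_card_fiber_of_mul_lt_card_of_maps_to
    (fun x _ ↦ hmaps x) hcard
  set s := {x ∈ ({0, 1, -1}ᶜ : Finset F) | quadraticChar F (f x) = ε}
  have hs {x : F} : x ∈ s ↔ (x ≠ 0 ∧ x ^ 2 ≠ 1) ∧ quadraticChar F (f x) = ε := by
    simp [s, not_or]
  obtain ⟨x, hx⟩ : s.Nonempty := Finset.card_pos.1 (by omega)
  obtain ⟨y, hy, hxy⟩ : ∃ y ∈ s,
      y ∉ ({y : F | y ≠ 0 ∧ (y - y⁻¹) ^ 2 = (x - x⁻¹) ^ 2} : Finset F) :=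
    Finset.exists_mem_notMem_of_card_lt_card
      ((card_filter_sub_inv_sq_eq_le (hs.1 hx).1.1).trans_lt hε)
  obtain ⟨⟨hx0, hx1⟩, hxε⟩ := hs.1 hx
  obtain ⟨⟨hy0, hy1⟩, hyε⟩ := hs.1 hy
  exact ⟨x, y, hx0, hy0, hx1, hy1, fun h ↦ hxy (by simp [hy0, h]), hxε.trans hyε.symm⟩

lemma exists_upper_mem_of_isSquare (hD : ∀ x : F, x ≠ 0 → !![x, 0; 0, x⁻¹] ∈ matricesOf S)
    {a b c d a' b' c' d' : F} (h : !![a, b; c, d] ∈ matricesOf S)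
    (h' : !![a', b'; c', d'] ∈ matricesOf S) (h0 : a * c ≠ 0) (h0' : a' * c' ≠ 0)
    (hsq : IsSquare (a * c * (a' * c'))) (hne : b * c ≠ b' * c') :
    ∃ x t y : F, t ≠ 0 ∧ !![x, t; 0, y] ∈ matricesOf S := by
  obtain ⟨w, hw⟩ := hsq
  have hw0 : w ≠ 0 := by rintro rfl; simp [h0, h0'] at hw
  have hc := right_ne_zero_of_mul h0
  have ha' := left_ne_zero_of_mul h0'
  have hdet := det_of_mem_matricesOf h
  have hdet' := det_of_mem_matricesOf h'
  obtain ⟨e, he0, he⟩ : ∃ e : F, e ≠ 0 ∧ e * (c * a') = w :=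
    ⟨w / (c * a'), by simp [hw0, hc, ha'], by field_simp⟩
  have hlower : c * e * a' = a * e⁻¹ * c' := by
    field_simp
    exact mul_left_cancel₀ (mul_ne_zero hc ha') (by linear_combination (e * c * a' + w) * he - hw)
  have hprod := mul_mem (mul_mem (inv_mem_matricesOf h) (hD e he0)) h'
  simp only [mul_fin_two, mul_zero, zero_add, add_zero] at hprod
  rw [show -c * e * a' + a * e⁻¹ * c' = 0 by linear_combination -hlower] at hprod
  refine ⟨_, _, _, fun hupper ↦ hne ?_, hprod⟩
  have hcross : (c * e * a') * (b * e⁻¹ * d') = (a * e⁻¹ * c') * (d * e * b') := by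
    rw [hlower, show d * e * b' = b * e⁻¹ * d' by linear_combination hupper]
  field_simp at hcross
  linear_combination hcross - b * c * hdet' + b' * c' * hdet

lemma eq_top_of_torus_mem [Fintype F] (hF : 16 ≤ Fintype.card F) (h2 : (2 : F) ≠ 0)
    (hD : ∀ x : F, x ≠ 0 → !![x, 0; 0, x⁻¹] ∈ matricesOf S) {a b c d : F}
    (hM : !![a, b; c, d] ∈ matricesOf S) (ha : a ≠ 0) (hb : b ≠ 0) (hc : c ≠ 0) (hd : d ≠ 0) :
    S = ⊤ := by
  classical
  have hconj (x : F) (hx : x ≠ 0) :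
      !![a * d * x - b * c * x⁻¹, b * d * (x - x⁻¹); -(a * c * (x - x⁻¹)),
        a * d * x⁻¹ - b * c * x] ∈ matricesOf S := by
    refine mul_mem_matricesOf (mul_mem_matricesOf (inv_mem_matricesOf hM) (hD x hx) rfl rfl rfl rfl)
      hM ?_ ?_ ?_ ?_ <;> ring
  let f (x : F) : F := (a * d * x - b * c * x⁻¹) * -(a * c * (x - x⁻¹))
  have hf {x : F} (hx : x ≠ 0) (hx1 : x ^ 2 ≠ 1) (h : f x = 0) : x ^ 2 = b * c / (a * d) := by
    have hxx : x - x⁻¹ ≠ 0 := by grind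
    have := (mul_eq_zero.1 h).resolve_right (by simp [ha, hc, hxx])
    field_simp at this ⊢
    linear_combination this
  obtain ⟨x, y, hx, hy, hx1, hy1, hxy, hchar⟩ := exists_quadraticChar_eq_of_card_ge hF f
  have hfx : f x ≠ 0 := fun h ↦ hxy <| by
    have hfy : f y = 0 := quadraticChar_eq_zero_iff.1 (hchar ▸ quadraticChar_eq_zero_iff.2 h)
    have := (hf hx hx1 h).trans (hf hy hy1 hfy).symm
    field_simp
    rw [this, mul_comm]
  have hfy : f y ≠ 0 := fun h ↦
    hfx (quadraticChar_eq_zero_iff.1 (hchar ▸ quadraticChar_eq_zero_iff.2 h))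
  have hsq : IsSquare (f x * f y) := by
    rw [← quadraticChar_one_iff_isSquare (mul_ne_zero hfx hfy), map_mul, ← hchar, ← sq,
      quadraticChar_sq_one hfx]
  obtain ⟨z, t, w, ht, hupper⟩ := exists_upper_mem_of_isSquare hD (hconj x hx) (hconj y hy) hfx hfy
    hsq fun h ↦ hxy (mul_left_cancel₀ (mul_ne_zero (mul_ne_zero (mul_ne_zero ha hb) hc) hd)
      (by linear_combination -h))
  exact eq_top_of_upper_mem_s2 (upper_mem_of_torus_mem h2 hD ht hupper) hM hc

end Generation

section GeneratingPairs

variable {R F : Type*} [CommRing R] [Field F]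

lemma two_ne_zero_of_not_isSquare_neg_one (h : ¬ IsSquare (-1 : R)) : (2 : R) ≠ 0 :=
  fun h2 ↦ h ⟨1, by linear_combination -h2⟩

lemma one_add_sq_ne_zero (h : ¬ IsSquare (-1 : R)) (x : R) : 1 + x ^ 2 ≠ 0 :=
  fun hx ↦ h ⟨x, by linear_combination -hx⟩

lemma exists_units_generator_sq_ne_one [Fintype F] (hF : 3 < Fintype.card F) :
    ∃ v : Fˣ, (∀ x, x ∈ Subgroup.zpowers v) ∧ (v : F) ^ 2 ≠ 1 := by
  classical
  obtain ⟨v, hv⟩ := IsCyclic.exists_generator (α := Fˣ)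
  refine ⟨v, hv, fun h ↦ ?_⟩
  have hord : orderOf v = Fintype.card F - 1 := by
    rw [orderOf_eq_card_of_forall_mem_zpowers hv, Nat.card_eq_fintype_card, Fintype.card_units]
  have hv2 : v ^ 2 = 1 := Units.ext (by simpa using h)
  have := Nat.le_of_dvd two_pos (orderOf_dvd_of_pow_eq_one hv2)
  omega

lemma det_fin_two_mul_sub_mul (a b c d a' b' c' d' : R) :
    (!![a, b; c, d] * !![a', b'; c', d'] - !![a', b'; c', d'] * !![a, b; c, d]).det =
      (b * (a' - d') - b' * (a - d)) * (c * (a' - d') - c' * (a - d)) - (b * c' - b' * c) ^ 2 := by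
  simp only [mul_fin_two, det_fin_two, Matrix.sub_apply, of_apply, cons_val', cons_val_zero,
    cons_val_one, cons_val_fin_one]
  ring

lemma exists_pair_det_commutator_eq_four_of_card_prime [Fintype F]
    (hF : (Fintype.card F).Prime) (h2 : (2 : F) ≠ 0) (h3 : (3 : F) ≠ 0) :
    ∃ A B : SL(2, F), Subgroup.closure {A, B} = ⊤ ∧
      (A.1 * B.1 - B.1 * A.1).det = 4 ∧ A.1.trace ≠ 0 ∧ B.1.trace ≠ 0 := by
  let A : SL(2, F) := ⟨!![2, 1; 1, 1], by rw [det_fin_two_of]; norm_num⟩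
  let B : SL(2, F) := ⟨!![3, 1; -1, 0], by rw [det_fin_two_of]; norm_num⟩
  refine ⟨A, B, ?_, ?_, ?_, ?_⟩
  · have hA : !![(2 : F), 1; 1, 1] ∈ matricesOf _ := left_mem_matricesOf_closure A B
    have hB : !![(3 : F), 1; -1, 0] ∈ matricesOf _ := right_mem_matricesOf_closure A B
    have hAB : !![5, 2; 2, 1] ∈ matricesOf (Subgroup.closure {A, B}) := by
      refine mul_mem_matricesOf hA hB ?_ ?_ ?_ ?_ <;> ring
    have hBA : !![7, 4; -2, -1] ∈ matricesOf (Subgroup.closure {A, B}) := by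
      refine mul_mem_matricesOf hB hA ?_ ?_ ?_ ?_ <;> ring
    have hcomm : !![-1, -6; 0, -1] ∈ matricesOf (Subgroup.closure {A, B}) := by
      refine mul_mem_matricesOf hAB (inv_mem_matricesOf hBA) ?_ ?_ ?_ ?_ <;> ring
    have hupper : !![1, 12; 0, 1] ∈ matricesOf (Subgroup.closure {A, B}) := by
      refine mul_mem_matricesOf hcomm hcomm ?_ ?_ ?_ ?_ <;> ring
    have h12 : (12 : F) ≠ 0 := by
      rw [show (12 : F) = 2 ^ 2 * 3 by norm_num]
      exact mul_ne_zero (pow_ne_zero 2 h2) h3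
    exact eq_top_of_upper_mem_s2 (upper_mem_of_card_prime hF h12 hupper) hA one_ne_zero
  · rw [det_fin_two_mul_sub_mul]
    norm_num
  · simpa [A, trace_fin_two_of, show (2 : F) + 1 = 3 by norm_num] using h3
  · simpa [B, trace_fin_two_of] using h3

lemma exists_pair_det_commutator_eq_four_of_card_ge [Fintype F]
    (hF : 16 ≤ Fintype.card F) (hsq : ¬ IsSquare (-1 : F)) :
    ∃ A B : SL(2, F), Subgroup.closure {A, B} = ⊤ ∧
      (A.1 * B.1 - B.1 * A.1).det = 4 ∧ A.1.trace ≠ 0 ∧ B.1.trace ≠ 0 := by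
  have h2 := two_ne_zero_of_not_isSquare_neg_one hsq
  obtain ⟨v, hv, hv1⟩ := exists_units_generator_sq_ne_one (F := F) (by omega)
  have hv0 : (v : F) ≠ 0 := v.ne_zero
  have hv1' := sub_ne_zero.2 hv1
  have hv2 : (v : F) ^ 2 + 1 ≠ 0 := add_comm (1 : F) _ ▸ one_add_sq_ne_zero hsq v
  set r : F := (v ^ 2 + 1) / (v ^ 2 - 1) with hr
  have hr0 : r ≠ 0 := div_ne_zero hv2 hv1'
  have hr1 : r ^ 2 - 1 = (2 * v / (v ^ 2 - 1)) ^ 2 := by rw [hr]; field_simp; ring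
  have hr2 : r ^ 2 - 1 ≠ 0 := by
    rw [hr1]; exact pow_ne_zero 2 (div_ne_zero (mul_ne_zero h2 hv0) hv1')
  let A : SL(2, F) := ⟨!![(v : F), 0; 0, (v : F)⁻¹], by rw [det_fin_two_of]; field_simp; simp⟩
  let B : SL(2, F) := ⟨!![1, 1; r ^ 2 - 1, r ^ 2], by rw [det_fin_two_of]; ring⟩
  refine ⟨A, B, ?_, ?_, ?_, ?_⟩
  · exact eq_top_of_torus_mem hF h2
      (torus_mem_of_zpowers_eq_top hv (left_mem_matricesOf_closure A B))
      (right_mem_matricesOf_closure A B) one_ne_zero one_ne_zero hr2 (pow_ne_zero 2 hr0)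
  · rw [det_fin_two_mul_sub_mul, hr1]
    field_simp
    ring
  · simp only [A, trace_fin_two_of]
    field_simp
    simpa
  · simpa only [B, trace_fin_two_of] using one_add_sq_ne_zero hsq r

lemma exists_pair_trace_eq_zero_of_card_prime [Fintype F] (hF : (Fintype.card F).Prime) {y : F}
    (hy : y ≠ 0) : ∃ A B : SL(2, F), Subgroup.closure {A, B} = ⊤ ∧
      A.1.trace = 0 ∧ B.1.trace = y := by
  let A : SL(2, F) := ⟨!![0, -y⁻¹; y, 0], by rw [det_fin_two_of]; field_simp; simp⟩
  let B : SL(2, F) := ⟨!![y, -y⁻¹; y, 0], by rw [det_fin_two_of]; field_simp; simp⟩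
  refine ⟨A, B, ?_, by simp [A, trace_fin_two_of], by simp [B, trace_fin_two_of]⟩
  have hA : !![0, -y⁻¹; y, 0] ∈ matricesOf _ := left_mem_matricesOf_closure A B
  have hB : !![y, -y⁻¹; y, 0] ∈ matricesOf _ := right_mem_matricesOf_closure A B
  have hupper : !![1, 1; 0, 1] ∈ matricesOf (Subgroup.closure {A, B}) := by
    refine mul_mem_matricesOf hB (inv_mem_matricesOf hA) ?_ ?_ ?_ ?_ <;> field_simp <;> ring
  exact eq_top_of_upper_mem_s2 (upper_mem_of_card_prime hF one_ne_zero hupper) hA hy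

lemma exists_pair_trace_eq_zero_of_card_ge [Fintype F] (hF : 16 ≤ Fintype.card F)
    (hsq : ¬ IsSquare (-1 : F)) {y : F} (hy : y ≠ 0) :
    ∃ A B : SL(2, F), Subgroup.closure {A, B} = ⊤ ∧ A.1.trace = 0 ∧ B.1.trace = y := by
  obtain ⟨v, hv, hv1⟩ := exists_units_generator_sq_ne_one (F := F) (by omega)
  have hv0 : (v : F) ≠ 0 := v.ne_zero
  have hv1' := sub_ne_zero.2 hv1
  set s : F := y * v / (v ^ 2 - 1) with hs
  have hs0 : s ≠ 0 := div_ne_zero (mul_ne_zero hy hv0) hv1'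
  have hs1 := one_add_sq_ne_zero hsq s
  let A : SL(2, F) := ⟨!![s, 1; -(1 + s ^ 2), -s], by rw [det_fin_two_of]; ring⟩
  let B : SL(2, F) := ⟨!![v * s, (v : F); -(1 + s ^ 2) / v, -s / v], by
    rw [det_fin_two_of]; field_simp; ring⟩
  refine ⟨A, B, ?_, by simp [A, trace_fin_two_of], ?_⟩
  · have hA : !![s, 1; -(1 + s ^ 2), -s] ∈ matricesOf _ := left_mem_matricesOf_closure A B
    have hB : !![v * s, (v : F); -(1 + s ^ 2) / v, -s / v] ∈ matricesOf _ :=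
      right_mem_matricesOf_closure A B
    have hdiag : !![(v : F), 0; 0, (v : F)⁻¹] ∈ matricesOf (Subgroup.closure {A, B}) := by
      refine mul_mem_matricesOf hB (inv_mem_matricesOf hA) ?_ ?_ ?_ ?_ <;> field_simp <;> ring
    exact eq_top_of_torus_mem hF (two_ne_zero_of_not_isSquare_neg_one hsq)
      (torus_mem_of_zpowers_eq_top hv hdiag) hA hs0 one_ne_zero (neg_ne_zero.2 hs1)
      (neg_ne_zero.2 hs0)
  · simp only [B, trace_fin_two_of, hs]
    field_simp
    ring

end GeneratingPairs

section QuadraticDivisor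

variable {F : Type*} [Field F] [Fintype F]

lemma mem_range_algebraMap_of_pow_card_eq {K : Type*} [Field K] [Algebra F K] {x : K}
    (hx : x ^ Fintype.card F = x) : x ∈ (algebraMap F K).range := by
  have hsplits : (X ^ Fintype.card F - X : F[X]).Splits := by
    rw [splits_iff_card_roots, FiniteField.roots_X_pow_card_sub_X,
      FiniteField.X_pow_card_sub_X_natDegree_eq F Fintype.one_lt_card, Finset.card_val,
      Finset.card_univ]
  exact hsplits.mem_range_of_isRoot (FiniteField.X_pow_card_sub_X_ne_zero F Fintype.one_lt_card)
    (by simp [hx])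

lemma natCast_ne_zero_of_dvd_card_sub_one_or_add_one {n : ℕ}
    (h : n ∣ Fintype.card F - 1 ∨ n ∣ Fintype.card F + 1) : (n : F) ≠ 0 := by
  have hcast : (Fintype.card F : F) = 0 := FiniteField.cast_card_eq_zero F
  have hcard : Fintype.card F - 1 + 1 = Fintype.card F := Nat.sub_add_cancel Fintype.card_pos
  intro hn
  rcases h with ⟨e, he⟩ | ⟨e, he⟩ <;> apply_fun (Nat.cast : ℕ → F) at he <;>
    push_cast [hn] at he
  · rw [← hcard] at hcast
    push_cast [he] at hcast
    simp at hcast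
  · simp [hcast] at he

lemma quadratic_dvd_X_pow_add_one_of_pow_eq_neg_one {K : Type*} [Field K] {ζ : K} {d : ℕ}
    (hζ : ζ ≠ 0) (hd : ζ ^ d = -1) (h2 : ζ ^ 2 ≠ 1) :
    X ^ 2 - C (ζ + ζ⁻¹) * X + 1 ∣ X ^ d + 1 := by
  have hinv : ζ * ζ⁻¹ = 1 := mul_inv_cancel₀ hζ
  have hfactor : X ^ 2 - C (ζ + ζ⁻¹) * X + 1 = (X - C ζ) * (X - C ζ⁻¹) := by
    have hC : C ζ * C ζ⁻¹ = 1 := by rw [← C_mul, hinv, C_1]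
    rw [C_add]
    linear_combination -hC
  rw [hfactor]
  refine IsCoprime.mul_dvd (isCoprime_X_sub_C_of_isUnit_sub ?_) ?_ ?_
  · exact (sub_ne_zero.2 fun h ↦ h2 (by linear_combination ζ * h + hinv)).isUnit
  · simp [dvd_iff_isRoot, hd]
  · simp [dvd_iff_isRoot, hd]

lemma exists_quadratic_dvd_X_pow_add_one {d : ℕ} (hd : 3 ≤ d)
    (h : 2 * d ∣ Fintype.card F - 1 ∨ 2 * d ∣ Fintype.card F + 1) :
    ∃ y : F, y ≠ 0 ∧ X ^ 2 - C y * X + 1 ∣ (X ^ d + 1 : F[X]) := by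
  let K := AlgebraicClosure F
  have hK : NeZero ((2 * d : ℕ) : K) := ⟨by
    rw [← map_natCast (algebraMap F K), _root_.map_ne_zero]
    exact natCast_ne_zero_of_dvd_card_sub_one_or_add_one h⟩
  obtain ⟨ζ, hζ⟩ := HasEnoughRootsOfUnity.exists_primitiveRoot K (2 * d)
  have hζ0 : ζ ≠ 0 := hζ.ne_zero (by omega)
  have hinv : ζ * ζ⁻¹ = 1 := mul_inv_cancel₀ hζ0
  have hζd : ζ ^ d = -1 := (hζ.pow (by omega) (mul_comm 2 d)).eq_neg_one_of_two_right
  have hζ2 : ζ ^ 2 ≠ 1 := hζ.pow_ne_one_of_pos_of_lt two_ne_zero (by omega)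
  have hζ4 : ζ ^ 4 ≠ 1 := hζ.pow_ne_one_of_pos_of_lt four_ne_zero (by omega)
  have hfrob : ζ ^ Fintype.card F = ζ ∨ ζ ^ Fintype.card F = ζ⁻¹ := by
    refine h.imp (fun h ↦ ?_) fun h ↦ eq_inv_of_mul_eq_one_left ?_
    · rw [← Nat.sub_add_cancel (Fintype.card_pos (α := F)), pow_succ, (hζ.pow_eq_one_iff_dvd _).2 h,
        one_mul]
    · rw [← pow_succ, (hζ.pow_eq_one_iff_dvd _).2 h]
  obtain ⟨y, hy⟩ : ζ + ζ⁻¹ ∈ (algebraMap F K).range := by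
    refine mem_range_algebraMap_of_pow_card_eq ?_
    change FiniteField.frobeniusAlgHom F K (ζ + ζ⁻¹) = _
    simp only [map_add, map_inv₀, FiniteField.coe_frobeniusAlgHom]
    obtain h | h := hfrob
    · rw [h]
    · rw [h, inv_inv, add_comm]
  refine ⟨y, ?_, ?_⟩
  · rintro rfl
    rw [map_zero] at hy
    exact hζ4 (by linear_combination -(ζ ^ 2 - 1) * (ζ * hy + hinv))
  · rw [← map_dvd_map' (algebraMap F K)]
    simpa [hy] using quadratic_dvd_X_pow_add_one_of_pow_eq_neg_one hζ0 hζd hζ2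

lemma exists_quadratic_dvd_X_pow_sub_C {m p : ℕ} [Fact p.Prime] [CharP F p] (h2 : (2 : F) ≠ 0)
    (hodd : Odd (Fintype.card F))
    (h : p ∣ m ∨ 3 ≤ m.gcd ((Fintype.card F + 1) / 2) ∨ 3 ≤ m.gcd ((Fintype.card F - 1) / 2)) :
    ∃ y ε : F, y ≠ 0 ∧ X ^ 2 - C y * X + 1 ∣ X ^ m - C ε := by
  have hcase {d : ℕ} (hd : 3 ≤ d) (hdm : d ∣ m)
      (h : 2 * d ∣ Fintype.card F - 1 ∨ 2 * d ∣ Fintype.card F + 1) :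
      ∃ y ε : F, y ≠ 0 ∧ X ^ 2 - C y * X + 1 ∣ X ^ m - C ε := by
    obtain ⟨y, hy, hdvd⟩ := exists_quadratic_dvd_X_pow_add_one hd h
    obtain ⟨e, rfl⟩ := hdm
    refine ⟨y, (-1) ^ e, hy, hdvd.trans ?_⟩
    simpa [pow_mul] using sub_dvd_pow_sub_pow (X ^ d : F[X]) (-1) e
  obtain ⟨n, hn⟩ := hodd
  obtain ⟨e, rfl⟩ | h | h := h
  · refine ⟨2, 1, h2, ?_⟩
    have hsq : (X ^ 2 - C 2 * X + 1 : F[X]) = (X - 1) ^ 2 := by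
      rw [show (C 2 : F[X]) = 2 from rfl]
      ring
    have hp : (X ^ p - 1 : F[X]) = (X - 1) ^ p := by rw [sub_pow_char, one_pow]
    rw [hsq, C_1, pow_mul]
    refine (pow_dvd_pow _ (Fact.out : p.Prime).two_le).trans (hp ▸ ?_)
    simpa using sub_dvd_pow_sub_pow (X ^ p : F[X]) 1 e
  · refine hcase h (Nat.gcd_dvd_left _ _)
      (.inr ((mul_dvd_mul_left 2 (Nat.gcd_dvd_right _ _)).trans ?_))
    exact (by omega : Fintype.card F + 1 = 2 * ((Fintype.card F + 1) / 2)) ▸ dvd_rfl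
  · refine hcase h (Nat.gcd_dvd_left _ _)
      (.inl ((mul_dvd_mul_left 2 (Nat.gcd_dvd_right _ _)).trans ?_))
    exact (by omega : Fintype.card F - 1 = 2 * ((Fintype.card F - 1) / 2)) ▸ dvd_rfl

end QuadraticDivisor

section CyclicCoproduct

variable {G : Type*} [Group G] {m n : ℕ}

lemma exists_hom_multiplicative_zmod {a : G} (ha : a ^ n = 1) :
    ∃ f : Multiplicative (ZMod n) →* G, f (.ofAdd 1) = a := by
  let f : ℤ →+ Additive G := zmultiplesHom (Additive G) (.ofMul a)
  have hf : f n = 0 := by simp [f, ← ofMul_pow, ha]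
  refine ⟨AddMonoidHom.toMultiplicativeLeft (ZMod.lift n ⟨f, hf⟩), ?_⟩
  have : ZMod.lift n ⟨f, hf⟩ ((1 : ℤ) : ZMod n) = f 1 := ZMod.lift_coe n ⟨f, hf⟩ 1
  rw [Int.cast_one] at this
  simp [this, f]

lemma exists_coprod_hom {a b : G} (ha : a ^ n = 1) (hb : b ^ m = 1) :
    ∃ φ : Monoid.Coprod (Multiplicative (ZMod n)) (Multiplicative (ZMod m)) →* G,
      φ (.inl (.ofAdd 1)) = a ∧ φ (.inr (.ofAdd 1)) = b := by
  obtain ⟨f, hf⟩ := exists_hom_multiplicative_zmod ha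
  obtain ⟨g, hg⟩ := exists_hom_multiplicative_zmod hb
  exact ⟨Monoid.Coprod.lift f g, by simpa using hf, by simpa using hg⟩

lemma closure_coprod_generators :
    Subgroup.closure {(.inl (.ofAdd 1) :
      Monoid.Coprod (Multiplicative (ZMod n)) (Multiplicative (ZMod m))), .inr (.ofAdd 1)} = ⊤ := by
  have hcyc (k : ℕ) : Subgroup.zpowers (.ofAdd 1 : Multiplicative (ZMod k)) = ⊤ :=
    eq_top_iff.2 fun x _ ↦ ⟨x.toAdd.cast, by simp [← ofAdd_zsmul]⟩
  rw [eq_top_iff, ← Monoid.Coprod.range_inl_sup_range_inr, sup_le_iff, MonoidHom.range_eq_map,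
    MonoidHom.range_eq_map, ← hcyc, ← hcyc, MonoidHom.map_zpowers, MonoidHom.map_zpowers,
    Subgroup.zpowers_le, Subgroup.zpowers_le]
  exact ⟨Subgroup.subset_closure (by simp), Subgroup.subset_closure (by simp)⟩

lemma surjective_of_closure_eq_top {H : Type*} [Group H] {φ : H →* G} {x y : H}
    (h : Subgroup.closure {φ x, φ y} = ⊤) : Function.Surjective φ := by
  rw [← MonoidHom.range_eq_top, eq_top_iff, ← h, Subgroup.closure_le]
  rintro _ (rfl | rfl) <;> exact ⟨_, rfl⟩

lemma closure_pair_map_eq_top {H : Type*} [Group H] {φ : H →* G} (hφ : Function.Surjective φ)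
    {x y : H} (h : Subgroup.closure {x, y} = ⊤) : Subgroup.closure {φ x, φ y} = ⊤ := by
  rw [← Set.image_pair, ← MonoidHom.map_closure, h, Subgroup.map_top_of_surjective φ hφ]

end CyclicCoproduct

section Projective

lemma pow_eq_algebraMap_of_dvd {R A : Type*} [CommRing R] [Ring A] [Algebra R A] {b : A}
    {f : R[X]} {m : ℕ} {ε : R} (hb : aeval b f = 0) (h : f ∣ X ^ m - C ε) :
    b ^ m = algebraMap R A ε := by
  have := aeval_eq_zero_of_dvd_aeval_eq_zero h hb
  rwa [map_sub, map_pow, aeval_X, aeval_C, sub_eq_zero] at this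

variable {R : Type*} [CommRing R]

lemma mem_center_of_coe_eq_algebraMap {A : SL(2, R)} {r : R} (h : A.1 = algebraMap R _ r) :
    A ∈ Subgroup.center SL(2, R) := by
  refine mem_center_iff.2 ⟨r, ?_, h.symm⟩
  rw [← A.2, h, Matrix.algebraMap_eq_diagonal]
  simp

lemma mk_pow_eq_one_iff {A : SL(2, R)} {n : ℕ} :
    QuotientGroup.mk' (Subgroup.center SL(2, R)) A ^ n = 1 ↔
      ∃ r : R, A.1 ^ n = algebraMap R _ r := by
  rw [← map_pow, QuotientGroup.mk'_apply, QuotientGroup.eq_one_iff]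
  refine ⟨fun h ↦ ?_, fun ⟨_, h⟩ ↦ mem_center_of_coe_eq_algebraMap ((coe_pow A n).trans h)⟩
  obtain ⟨r, -, hr⟩ := mem_center_iff.1 h
  exact ⟨r, (coe_pow A n).symm.trans hr.symm⟩

variable [Nontrivial R]

lemma aeval_quadratic_eq_zero (A : SL(2, R)) :
    aeval A.1 (X ^ 2 - C A.1.trace * X + 1 : R[X]) = 0 := by
  have := A.1.aeval_self_charpoly
  rwa [charpoly_fin_two, A.2, C_1] at this

lemma exists_surjective_coprod_hom_of_trace {m : ℕ} {A B : SL(2, R)} {ε : R}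
    (hgen : Subgroup.closure {A, B} = ⊤) (hA : A.1.trace = 0)
    (hB : X ^ 2 - C B.1.trace * X + 1 ∣ X ^ m - C ε) :
    ∃ φ : Monoid.Coprod (Multiplicative (ZMod 2)) (Multiplicative (ZMod m)) →*
      SL(2, R) ⧸ Subgroup.center SL(2, R), Function.Surjective φ := by
  have hA2 : X ^ 2 - C A.1.trace * X + 1 ∣ (X ^ 2 - C (-1) : R[X]) := by simp [hA]
  obtain ⟨φ, hφA, hφB⟩ := exists_coprod_hom
    (mk_pow_eq_one_iff.2 ⟨_, pow_eq_algebraMap_of_dvd (aeval_quadratic_eq_zero A) hA2⟩)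
    (mk_pow_eq_one_iff.2 ⟨_, pow_eq_algebraMap_of_dvd (aeval_quadratic_eq_zero B) hB⟩)
  refine ⟨φ, surjective_of_closure_eq_top (x := .inl (.ofAdd 1)) (y := .inr (.ofAdd 1)) ?_⟩
  rw [hφA, hφB]
  exact closure_pair_map_eq_top (QuotientGroup.mk'_surjective _) hgen

end Projective

section CommutatorIdeal

variable {R A : Type*} [CommRing R] [Ring A] [Algebra R A] {I : Ideal A} {s : Set A}

lemma mul_mem_of_mem_adjoin (hI : ∀ z ∈ I, ∀ x ∈ s, z * x ∈ I) {a : A}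
    (ha : a ∈ Algebra.adjoin R s) : ∀ z ∈ I, z * a ∈ I := by
  induction ha using Algebra.adjoin_induction with
  | mem x hx => exact fun z hz ↦ hI z hz x hx
  | algebraMap r => exact fun z hz ↦ Algebra.commutes r z ▸ I.mul_mem_left _ hz
  | add a b _ _ iha ihb => exact fun z hz ↦ mul_add z a b ▸ I.add_mem (iha z hz) (ihb z hz)
  | mul a b _ _ iha ihb => exact fun z hz ↦ mul_assoc z a b ▸ ihb _ (iha z hz)

lemma mul_sub_mul_mem_of_mem_adjoin (hI : ∀ z ∈ I, ∀ x ∈ s, z * x ∈ I)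
    {a b : A} (hs : ∀ x ∈ s, a * x - x * a ∈ I) (hb : b ∈ Algebra.adjoin R s) :
    a * b - b * a ∈ I := by
  induction hb using Algebra.adjoin_induction with
  | mem x hx => exact hs x hx
  | algebraMap r => simp [← Algebra.commutes r a]
  | add b c _ _ ihb ihc =>
    rw [show a * (b + c) - (b + c) * a = (a * b - b * a) + (a * c - c * a) by noncomm_ring]
    exact I.add_mem ihb ihc
  | mul b c _ hc ihb ihc =>
    rw [show a * (b * c) - b * c * a = (a * b - b * a) * c + b * (a * c - c * a) by noncomm_ring]
    exact I.add_mem (mul_mem_of_mem_adjoin hI hc _ ihb) (I.mul_mem_left _ ihc)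

end CommutatorIdeal

section ReducedNorm

variable {R : Type*} [CommRing R] {c₁ c₂ c₃ c : R}

/-- The reduced norm `star q * q` of a quaternion algebra. -/
def reducedNorm : ℍ[R,c₁,c₂,c₃] →* R where
  toFun q := (star q * q).re
  map_one' := by simp
  map_mul' p q := by
    simp only [star_mul, QuaternionAlgebra.re_mul, QuaternionAlgebra.imI_mul,
      QuaternionAlgebra.imJ_mul, QuaternionAlgebra.imK_mul, QuaternionAlgebra.re_star,
      QuaternionAlgebra.imI_star, QuaternionAlgebra.imJ_star, QuaternionAlgebra.imK_star]
    ring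

lemma star_mul_self_eq_reducedNorm (q : ℍ[R,c₁,c₂,c₃]) :
    star q * q = algebraMap R _ (reducedNorm q) :=
  QuaternionAlgebra.star_mul_eq_coe q

lemma mem_unitary_iff_reducedNorm {q : ℍ[R,c₁,c₂,c₃]} :
    q ∈ unitary ℍ[R,c₁,c₂,c₃] ↔ reducedNorm q = 1 := by
  refine ⟨fun h ↦ congrArg QuaternionAlgebra.re h.1, fun h ↦ ?_⟩
  have hq : star q * q = 1 := by rw [star_mul_self_eq_reducedNorm, h, map_one]
  exact ⟨hq, (star_comm_self' q).symm.trans hq⟩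

lemma mul_sub_mul_mul_eq_star_mul (p q : ℍ[R,c₁,c₂,c₃]) :
    (p * q - q * p) * p = star p * (p * q - q * p) ∧
      (p * q - q * p) * q = star q * (p * q - q * p) := by
  constructor <;> ext <;> simp <;> ring

/-- The subgroup of the unitary elements lying in a given subalgebra; it is closed under inversion
because `star q` is a scalar minus `q`. -/
def unitaryIn (S : Subalgebra R ℍ[R,c₁,c₂,c₃]) : Subgroup (unitary ℍ[R,c₁,c₂,c₃]) where
  carrier := {u | (u : ℍ[R,c₁,c₂,c₃]) ∈ S}
  one_mem' := S.one_mem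
  mul_mem' := S.mul_mem
  inv_mem' {u} hu := by
    change star (u : ℍ[R,c₁,c₂,c₃]) ∈ S
    rw [QuaternionAlgebra.star_eq_two_re_sub]
    exact S.sub_mem (S.algebraMap_mem _) hu

lemma mem_unitaryIn {S : Subalgebra R ℍ[R,c₁,c₂,c₃]} {u : unitary ℍ[R,c₁,c₂,c₃]} :
    u ∈ unitaryIn S ↔ (u : ℍ[R,c₁,c₂,c₃]) ∈ S :=
  Iff.rfl

instance : (unitaryIn (⊥ : Subalgebra R ℍ[R,c₁,c₂,c₃])).Normal where
  conj_mem u hu v := by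
    obtain ⟨r, hr⟩ := Algebra.mem_bot.1 (mem_unitaryIn.1 hu)
    have : v * u = u * v := Subtype.ext (by simpa [← hr] using (Algebra.commutes r v.1).symm)
    rwa [this, mul_inv_cancel_right]

lemma mem_adjoin_of_mk_mem_closure {u v x : unitary ℍ[R,c₁,c₂,c₃]}
    (h : QuotientGroup.mk' (unitaryIn ⊥) x ∈
      Subgroup.closure {QuotientGroup.mk' (unitaryIn ⊥) u, QuotientGroup.mk' (unitaryIn ⊥) v}) :
    x.1 ∈ Algebra.adjoin R {u.1, v.1} := by
  let S := Algebra.adjoin R {u.1, v.1}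
  suffices QuotientGroup.mk' (unitaryIn ⊥) x ∈
      (unitaryIn S).map (QuotientGroup.mk' (unitaryIn ⊥)) by
    rw [← Subgroup.mem_comap, QuotientGroup.comap_map_mk',
      sup_eq_right.2 fun _ ↦ (bot_le (a := S) ·)] at this
    exact mem_unitaryIn.1 this
  refine (Subgroup.closure_le _).2 ?_ h
  rintro _ (rfl | rfl) <;>
    exact Subgroup.mem_map_of_mem _ (mem_unitaryIn.2 (Algebra.subset_adjoin (by simp)))

/-- The determinant of `1, p, q, p * q` in the basis `1, i, j, k`: it measures how far `p` and `q`
are from generating the quaternion algebra. -/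
def commutatorIndex (p q : ℍ[R,-1,0,c]) : R :=
  (p.imI * q.imJ - p.imJ * q.imI) ^ 2 + (p.imI * q.imK - p.imK * q.imI) ^ 2
    - c * (p.imJ * q.imK - p.imK * q.imJ) ^ 2

lemma reducedNorm_apply (q : ℍ[R,-1,0,c]) :
    reducedNorm q = q.re ^ 2 + q.imI ^ 2 - c * q.imJ ^ 2 - c * q.imK ^ 2 := by
  change (star q * q).re = _
  simp only [QuaternionAlgebra.re_mul, QuaternionAlgebra.re_star, QuaternionAlgebra.imI_star,
    QuaternionAlgebra.imJ_star, QuaternionAlgebra.imK_star]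
  ring

lemma reducedNorm_mul_sub_mul (p q : ℍ[R,-1,0,c]) :
    reducedNorm (p * q - q * p) = -4 * c * commutatorIndex p q := by
  simp only [reducedNorm_apply, commutatorIndex, QuaternionAlgebra.re_sub,
    QuaternionAlgebra.imI_sub, QuaternionAlgebra.imJ_sub, QuaternionAlgebra.imK_sub,
    QuaternionAlgebra.re_mul, QuaternionAlgebra.imI_mul, QuaternionAlgebra.imJ_mul,
    QuaternionAlgebra.imK_mul]
  ring

end ReducedNorm

section Homogeneous

variable {R S : Type*} [CommRing R] [CommRing S] {c : R}

/-- The unitary quaternions that become homogeneous after applying `f` to their coordinates, for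
the `ℤ/2`-grading with even part spanned by `1, j` and odd part spanned by `i, k`. -/
def homogeneousUnitary (f : R →+* S) : Subgroup (unitary ℍ[R,-1,0,c]) where
  carrier := {u | f u.1.imI = 0 ∧ f u.1.imK = 0 ∨ f u.1.re = 0 ∧ f u.1.imJ = 0}
  one_mem' := by simp
  mul_mem' := by
    rintro u v (⟨hu, hu'⟩ | ⟨hu, hu'⟩) (⟨hv, hv'⟩ | ⟨hv, hv'⟩) <;> simp [hu, hu', hv, hv']
  inv_mem' {u} hu := by
    change f (star u.1).imI = 0 ∧ f (star u.1).imK = 0 ∨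
      f (star u.1).re = 0 ∧ f (star u.1).imJ = 0
    simpa using hu

lemma map_commutatorIndex_of_mem_homogeneousUnitary {f : R →+* S} {u v : unitary ℍ[R,-1,0,c]}
    (hu : u ∈ homogeneousUnitary f) (hv : v ∈ homogeneousUnitary f) :
    f (commutatorIndex u.1 v.1) = 0 ∨ ((f u.1.re = 0 ∨ f v.1.re = 0) ∧
      ∃ a d : S, f (commutatorIndex u.1 v.1) = d ^ 2 ∧ a ^ 2 - f c * d ^ 2 = 1) := by
  have hnorm (w : unitary ℍ[R,-1,0,c]) :
      f w.1.re ^ 2 + f w.1.imI ^ 2 - f c * f w.1.imJ ^ 2 - f c * f w.1.imK ^ 2 = 1 := by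
    have := congrArg f (mem_unitary_iff_reducedNorm.1 w.2)
    simpa only [reducedNorm_apply, map_sub, map_add, map_mul, map_pow, map_one] using this
  have hNu := hnorm u
  have hNv := hnorm v
  simp only [commutatorIndex, map_add, map_sub, map_mul, map_pow]
  rcases hu with ⟨hu, hu'⟩ | ⟨hu, hu'⟩ <;> rcases hv with ⟨hv, hv'⟩ | ⟨hv, hv'⟩ <;>
    simp only [hu, hu', hv, hv'] at hNu hNv ⊢
  · left; ring
  · refine .inr ⟨.inr trivial, f u.1.re, f u.1.imJ, ?_, by linear_combination hNu⟩
    linear_combination f u.1.imJ ^ 2 * hNv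
  · refine .inr ⟨.inl trivial, f v.1.re, f v.1.imJ, ?_, by linear_combination hNv⟩
    linear_combination f v.1.imJ ^ 2 * hNu
  · refine .inr ⟨.inl trivial, f u.1.imI * f v.1.imI - f c * f u.1.imK * f v.1.imK,
      f u.1.imI * f v.1.imK - f u.1.imK * f v.1.imI, by ring, ?_⟩
    linear_combination hNv + (f v.1.imI ^ 2 - f c * f v.1.imK ^ 2) * hNu

end Homogeneous

section TraceAlgebra

/-- The algebra generated by two elements `a`, `b` of reduced norm one subject to `tr a = 0`,
`tr b = 2 * τ` and `tr (a * b) = 2 * x`. It is presented as a quaternion algebra with `a = i` and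
`b = τ - x * i + j`. -/
abbrev TraceAlgebra {R : Type*} [CommRing R] (τ x : R) : Type _ := ℍ[R, -1, 0, τ ^ 2 + x ^ 2 - 1]

namespace TraceAlgebra

variable {R : Type*} [CommRing R] (τ x : R)

/-- The generator of trace `0` of the trace algebra. -/
def left : unitary (TraceAlgebra τ x) :=
  ⟨⟨0, 1, 0, 0⟩, mem_unitary_iff_reducedNorm.2 (by simp [reducedNorm_apply])⟩

/-- The generator of trace `2 * τ` of the trace algebra. -/
def right : unitary (TraceAlgebra τ x) :=
  ⟨⟨τ, -x, 1, 0⟩, mem_unitary_iff_reducedNorm.2 (by rw [reducedNorm_apply]; ring)⟩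

lemma left_mul_left : (left τ x).1 * (left τ x).1 = -1 := by
  ext <;> simp [left]

lemma aeval_right : aeval (right τ x).1 (X ^ 2 - C (2 * τ) * X + 1 : R[X]) = 0 := by
  simp only [right, map_add, map_sub, map_mul, aeval_X, aeval_C, map_one, sq,
    QuaternionAlgebra.algebraMap_eq]
  ext <;> simp <;> ring

lemma commutatorIndex_left_right : commutatorIndex (left τ x).1 (right τ x).1 = 1 := by
  simp [left, right, commutatorIndex]

lemma left_mem_homogeneousUnitary {S : Type*} [CommRing S] (f : R →+* S) :
    left τ x ∈ homogeneousUnitary f :=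
  .inr (by simp [left])

lemma right_mem_homogeneousUnitary {S : Type*} [CommRing S] {f : R →+* S} (hx : f x = 0) :
    right τ x ∈ homogeneousUnitary f :=
  .inl (by simp [right, hx])

variable {τ x}

lemma isUnit_commutatorIndex [IsDomain R] (h : 4 * (τ ^ 2 + x ^ 2 - 1) ≠ 0)
    {u v : TraceAlgebra τ x} (hleft : (left τ x).1 ∈ Algebra.adjoin R {u, v})
    (hright : (right τ x).1 ∈ Algebra.adjoin R {u, v}) : IsUnit (commutatorIndex u v) := by
  let I : Ideal (TraceAlgebra τ x) := Ideal.span {u * v - v * u}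
  have hδ : u * v - v * u ∈ I := Ideal.mem_span_singleton_self _
  have hδ' : v * u - u * v ∈ I := by simpa using I.neg_mem hδ
  have hI : ∀ z ∈ I, ∀ y ∈ ({u, v} : Set _), z * y ∈ I := by
    intro z hz y hy
    obtain ⟨e, rfl⟩ := Ideal.mem_span_singleton'.1 hz
    rw [mul_assoc]
    obtain ⟨hu, hv⟩ := mul_sub_mul_mul_eq_star_mul u v
    obtain rfl | rfl := hy
    · exact I.mul_mem_left _ (hu ▸ I.mul_mem_left _ hδ)
    · exact I.mul_mem_left _ (hv ▸ I.mul_mem_left _ hδ)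
  have hmem : (left τ x).1 * (right τ x).1 - (right τ x).1 * (left τ x).1 ∈ I := by
    refine mul_sub_mul_mem_of_mem_adjoin hI (fun y hy ↦ ?_) hright
    rw [← neg_sub (y * _)]
    refine I.neg_mem (mul_sub_mul_mem_of_mem_adjoin hI (fun z hz ↦ ?_) hleft)
    rcases hy with rfl | rfl <;> rcases hz with rfl | rfl <;> simp [hδ, hδ']
  obtain ⟨e, he⟩ := Ideal.mem_span_singleton'.1 hmem
  have hnorm := congrArg reducedNorm he
  rw [map_mul, reducedNorm_mul_sub_mul, reducedNorm_mul_sub_mul,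
    commutatorIndex_left_right] at hnorm
  refine IsUnit.of_mul_eq_one (reducedNorm e) (mul_left_cancel₀ h ?_)
  linear_combination -hnorm

end TraceAlgebra

end TraceAlgebra

section Specialization

variable {S : Type*} [CommRing S]

lemma mul_self_fin_two (M : Matrix (Fin 2) (Fin 2) S) : M * M = M.trace • M - M.det • 1 := by
  ext i j; fin_cases i <;> fin_cases j <;>
    simp [mul_apply, det_fin_two, trace_fin_two] <;> ring

lemma mul_add_mul_fin_two (M N : Matrix (Fin 2) (Fin 2) S) :
    M * N + N * M =
      M.trace • N + N.trace • M + ((M * N).trace - M.trace * N.trace) • 1 := by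
  ext i j; fin_cases i <;> fin_cases j <;>
    simp [mul_apply, trace_fin_two] <;> ring

variable {R : Type*} [CommRing R] [Algebra R S] {τ x : R}

/-- The universal property of the trace algebra. -/
def TraceAlgebra.basisOfRelations {A : Type*} [Ring A] [Algebra R A] (a b : A) (ha : a * a = -1)
    (hb : b * b = (2 * τ) • b - 1) (hab : a * b + b * a = (2 * τ) • a + (2 * x) • 1) :
    QuaternionAlgebra.Basis A (-1) 0 (τ ^ 2 + x ^ 2 - 1) where
  i := a
  j := b - τ • 1 + x • a
  k := a * (b - τ • 1 + x • a)
  i_mul_i := by simp [ha]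
  j_mul_j := by
    have hba : b * a = (2 * τ) • a + (2 * x) • 1 - a * b := by rw [← hab]; abel
    simp only [add_mul, mul_add, sub_mul, mul_sub, smul_mul_assoc, mul_smul_comm, one_mul, mul_one,
      ha, hb, hba]
    module
  i_mul_j := rfl
  j_mul_i := by
    have hba : b * a = (2 * τ) • a + (2 * x) • 1 - a * b := by rw [← hab]; abel
    simp only [add_mul, mul_add, sub_mul, mul_sub, smul_mul_assoc, mul_smul_comm, one_mul, mul_one,
      ha, hba]
    module

lemma exists_specialization {A B : SL(2, S)} (hA : A.1.trace = 0)
    (hB : B.1.trace = algebraMap R S (2 * τ)) (hAB : (A.1 * B.1).trace = algebraMap R S (2 * x)) :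
    ∃ φ : TraceAlgebra τ x →ₐ[R] Matrix (Fin 2) (Fin 2) S,
      φ (TraceAlgebra.left τ x).1 = A.1 ∧ φ (TraceAlgebra.right τ x).1 = B.1 ∧
        ∀ q, (φ q).trace = algebraMap R S (2 * q.re) := by
  have hA2 : A.1 * A.1 = -1 := by rw [mul_self_fin_two, hA, A.2, zero_smul, one_smul, zero_sub]
  have hB2 : B.1 * B.1 = (2 * τ) • B.1 - 1 := by
    rw [mul_self_fin_two, hB, B.2, one_smul, algebraMap_smul]
  have hAB2 : A.1 * B.1 + B.1 * A.1 = (2 * τ) • A.1 + (2 * x) • 1 := by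
    rw [mul_add_mul_fin_two, hA, hB, hAB, zero_smul, zero_mul, sub_zero, zero_add,
      algebraMap_smul, algebraMap_smul]
  refine ⟨(TraceAlgebra.basisOfRelations A.1 B.1 hA2 hB2 hAB2).liftHom, ?_, ?_, fun q ↦ ?_⟩
  · simp [TraceAlgebra.left, QuaternionAlgebra.Basis.lift, TraceAlgebra.basisOfRelations]
  · simp [TraceAlgebra.right, QuaternionAlgebra.Basis.lift, TraceAlgebra.basisOfRelations,
      Algebra.algebraMap_eq_smul_one]
    abel
  · simp only [QuaternionAlgebra.Basis.liftHom_apply, QuaternionAlgebra.Basis.lift,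
      TraceAlgebra.basisOfRelations, Algebra.algebraMap_eq_smul_one, mul_add, mul_sub,
      mul_smul_comm, mul_one, hA2, trace_add, trace_sub, trace_smul, trace_neg, trace_one, hA, hB,
      hAB, Fintype.card_fin]
    simp only [Algebra.smul_def, map_mul, map_ofNat]
    push_cast
    ring

lemma det_of_trace_eq {c : R} (φ : ℍ[R,-1,0,c] →ₐ[R] Matrix (Fin 2) (Fin 2) S)
    (hφ : ∀ q, (φ q).trace = algebraMap R S (2 * q.re)) (q : ℍ[R,-1,0,c]) :
    (φ q).det = algebraMap R S (reducedNorm q) := by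
  have hstar : star q * q = (2 * q.re) • q - q * q := by
    rw [QuaternionAlgebra.star_eq_two_re_sub, zero_mul, add_zero, sub_mul,
      QuaternionAlgebra.coe_mul_eq_smul]
  have hdet := mul_self_fin_two (φ q)
  have hnorm := congrArg φ (star_mul_self_eq_reducedNorm q)
  rw [hstar, map_sub, map_smul, map_mul, hdet, hφ, algebraMap_smul, sub_sub_cancel,
    AlgHom.commutes] at hnorm
  simpa [Matrix.algebraMap_matrix_apply] using congrFun₂ hnorm 0 0

/-- The homomorphism to `SL(2, S)` induced on unitary elements by an algebra homomorphism which is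
compatible with reduced traces, hence with reduced norms. -/
def unitaryToSL {c : R} (φ : ℍ[R,-1,0,c] →ₐ[R] Matrix (Fin 2) (Fin 2) S)
    (hφ : ∀ q, (φ q).trace = algebraMap R S (2 * q.re)) : unitary ℍ[R,-1,0,c] →* SL(2, S) where
  toFun u := ⟨φ u.1, by
    rw [det_of_trace_eq φ hφ, mem_unitary_iff_reducedNorm.1 u.2, map_one]⟩
  map_one' := Subtype.ext (map_one φ)
  map_mul' u v := Subtype.ext (map_mul φ u.1 v.1)

lemma unitaryIn_bot_le_comap_center {c : R} (φ : ℍ[R,-1,0,c] →ₐ[R] Matrix (Fin 2) (Fin 2) S)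
    (hφ : ∀ q, (φ q).trace = algebraMap R S (2 * q.re)) :
    unitaryIn ⊥ ≤ (Subgroup.center SL(2, S)).comap (unitaryToSL φ hφ) := by
  intro u hu
  obtain ⟨r, hr⟩ := Algebra.mem_bot.1 (mem_unitaryIn.1 hu)
  refine mem_center_of_coe_eq_algebraMap (r := algebraMap R S r) ?_
  change φ u.1 = _
  rw [← hr, AlgHom.commutes, ← IsScalarTower.algebraMap_apply]

end Specialization

section ProjectiveLifts

variable {R F : Type*} [CommRing R] [Field F]

lemma commute_of_left_mem_center {G : Type*} [Group G] {a b : G}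
    (hgen : Subgroup.closure {QuotientGroup.mk' (Subgroup.center G) a,
      QuotientGroup.mk' (Subgroup.center G) b} = ⊤)
    (ha : a ∈ Subgroup.center G) (x y : G) : x * y = y * x := by
  have ha1 : QuotientGroup.mk' (Subgroup.center G) a = 1 := (QuotientGroup.eq_one_iff a).2 ha
  have hcyc : IsCyclic (G ⧸ Subgroup.center G) := by
    refine isCyclic_iff_exists_zpowers_eq_top.2 ⟨QuotientGroup.mk' _ b, ?_⟩
    rw [← hgen, ha1, Subgroup.closure_insert_one, Subgroup.zpowers_eq_closure]
  exact (MonoidHom.isMulCommutative_of_isCyclic_of_ker_le_center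
    (QuotientGroup.mk' (Subgroup.center G)) (QuotientGroup.ker_mk' _).le).is_comm.comm x y

lemma exists_eq_smul_of_mk_eq {M N : SL(2, R)}
    (h : QuotientGroup.mk' (Subgroup.center SL(2, R)) M = QuotientGroup.mk' _ N) :
    ∃ r : R, r ^ 2 = 1 ∧ N.1 = r • M.1 := by
  obtain ⟨z, hz, rfl⟩ := (QuotientGroup.mk'_eq_mk' _).1 h
  obtain ⟨r, hr, hrz⟩ := mem_center_iff.1 hz
  refine ⟨r, by simpa using hr, ?_⟩
  rw [Matrix.SpecialLinearGroup.coe_mul, ← hrz, scalar_apply, ← smul_one_eq_diagonal,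
    Matrix.mul_smul, mul_one]

lemma eq_zero_of_smul_eq_algebraMap {M : SL(2, F)} (hM : M ∉ Subgroup.center SL(2, F)) {s t : F}
    (h : s • M.1 = algebraMap F _ t) : s = 0 := by
  by_contra hs
  refine hM (mem_center_of_coe_eq_algebraMap (r := s⁻¹ * t) ?_)
  rw [map_mul, ← h, ← Algebra.smul_def, inv_smul_smul₀ hs]

lemma trace_eq_zero_of_sq_eq_algebraMap {M : SL(2, F)} (hM : M ∉ Subgroup.center SL(2, F)) {r : F}
    (h : M.1 ^ 2 = algebraMap F _ r) : M.1.trace = 0 := by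
  refine eq_zero_of_smul_eq_algebraMap hM (t := r + 1) ?_
  rw [map_add, map_one, ← h, sq, mul_self_fin_two, M.2, one_smul, sub_add_cancel]

lemma quadratic_dvd_of_pow_eq_algebraMap {M : SL(2, F)} (hM : M ∉ Subgroup.center SL(2, F))
    {m : ℕ} {r : F} (h : M.1 ^ m = algebraMap F _ r) :
    X ^ 2 - C M.1.trace * X + 1 ∣ X ^ m - C r := by
  have hdim := M.1.charpoly_natDegree_eq_dim
  rw [Fintype.card_fin] at hdim
  have hchar : M.1.charpoly = X ^ 2 - C M.1.trace * X + 1 := by rw [charpoly_fin_two, M.2, C_1]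
  rw [← hchar, ← modByMonic_eq_zero_iff_dvd M.1.charpoly_monic]
  have hdeg : ((X ^ m - C r) %ₘ M.1.charpoly).natDegree < 2 :=
    (natDegree_modByMonic_lt _ M.1.charpoly_monic fun h1 ↦ by simp [h1] at hdim).trans_eq hdim
  have haeval : aeval M.1 ((X ^ m - C r) %ₘ M.1.charpoly) = 0 := by
    rw [← aeval_eq_aeval_mod_charpoly, map_sub, map_pow, aeval_X, aeval_C, h, sub_self]
  obtain ⟨s, t, hst⟩ := exists_eq_X_add_C_of_natDegree_le_one (Nat.le_of_lt_succ hdeg)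
  rw [hst, map_add, map_mul, aeval_C, aeval_X, aeval_C, ← Algebra.smul_def, add_eq_zero_iff_eq_neg,
    ← map_neg] at haeval
  have hs := eq_zero_of_smul_eq_algebraMap hM haeval
  rw [hs, zero_smul, eq_comm, map_eq_zero_iff _ (algebraMap F _).injective, neg_eq_zero] at haeval
  rw [hst, hs, haeval, C_0, zero_mul, zero_add]

lemma det_smul_mul_sub_mul {r s : R} (hr : r ^ 2 = 1) (hs : s ^ 2 = 1)
    (M N : Matrix (Fin 2) (Fin 2) R) :
    ((r • M) * (s • N) - (s • N) * (r • M)).det = (M * N - N * M).det := by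
  rw [smul_mul_smul_comm, smul_mul_smul_comm, mul_comm s r, ← smul_sub, det_smul,
    Fintype.card_fin, mul_pow, hr, hs, one_mul, one_mul]

end ProjectiveLifts

section GenericPair

lemma coprod_hom_mem {G : Type*} [Group G] {m n : ℕ}
    {φ : Monoid.Coprod (Multiplicative (ZMod n)) (Multiplicative (ZMod m)) →* G} {S : Subgroup G}
    (hl : φ (.inl (.ofAdd 1)) ∈ S) (hr : φ (.inr (.ofAdd 1)) ∈ S) (g) : φ g ∈ S := by
  have hgen : Subgroup.closure _ ≤ S.comap φ :=
    (Subgroup.closure_le _).2 (Set.pair_subset (Subgroup.mem_comap.2 hl) (Subgroup.mem_comap.2 hr))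
  rw [closure_coprod_generators] at hgen
  exact hgen trivial

variable {R : Type*} [CommRing R] {τ ε : R} {m : ℕ}

lemma exists_unitary_hom_of_ringHom {S : Type*} [CommRing S] {x : R} (f : R →+* S)
    {A B : SL(2, S)} (hA : A.1.trace = 0) (hB : B.1.trace = f (2 * τ))
    (hAB : (A.1 * B.1).trace = f (2 * x)) :
    ∃ σ : unitary (TraceAlgebra τ x) →* SL(2, S),
      σ (TraceAlgebra.left τ x) = A ∧ σ (TraceAlgebra.right τ x) = B ∧
      unitaryIn ⊥ ≤ (Subgroup.center SL(2, S)).comap σ ∧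
      (∀ u, (σ u).1.trace = f (2 * u.1.re)) ∧
      ∀ u v, ((σ u).1 * (σ v).1 - (σ v).1 * (σ u).1).det =
        f (reducedNorm (u.1 * v.1 - v.1 * u.1)) := by
  algebraize [f]
  obtain ⟨φ, hφA, hφB, hφ⟩ := exists_specialization (R := R) (τ := τ) (x := x) hA hB hAB
  refine ⟨unitaryToSL φ hφ, Subtype.ext hφA, Subtype.ext hφB, unitaryIn_bot_le_comap_center φ hφ,
    fun u ↦ hφ u.1, fun u v ↦ ?_⟩
  rw [← RingHom.algebraMap_toAlgebra f, ← det_of_trace_eq φ hφ, map_sub, map_mul, map_mul]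
  rfl

lemma exists_coprod_hom_traceAlgebra (x : R) (h : X ^ 2 - C (2 * τ) * X + 1 ∣ X ^ m - C ε) :
    ∃ Θ : Monoid.Coprod (Multiplicative (ZMod 2)) (Multiplicative (ZMod m)) →*
        unitary (TraceAlgebra τ x) ⧸ unitaryIn (⊥ : Subalgebra R (TraceAlgebra τ x)),
      Θ (.inl (.ofAdd 1)) = QuotientGroup.mk' _ (TraceAlgebra.left τ x) ∧
      Θ (.inr (.ofAdd 1)) = QuotientGroup.mk' _ (TraceAlgebra.right τ x) := by
  have hmk {u : unitary (TraceAlgebra τ x)} {n : ℕ} {r : R} (hu : u.1 ^ n = algebraMap R _ r) :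
      QuotientGroup.mk' (unitaryIn ⊥) u ^ n = 1 := by
    rw [← map_pow, QuotientGroup.mk'_apply, QuotientGroup.eq_one_iff, mem_unitaryIn,
      SubmonoidClass.coe_pow, hu]
    exact Subalgebra.algebraMap_mem _ _
  refine exists_coprod_hom (hmk (r := -1) ?_)
    (hmk (pow_eq_algebraMap_of_dvd (TraceAlgebra.aeval_right τ x) h))
  rw [sq, TraceAlgebra.left_mul_left, map_neg, map_one]

lemma exists_factorization_through_traceAlgebra {S : Type*} [CommRing S] {x : R} (f : R →+* S)
    {θ : Monoid.Coprod (Multiplicative (ZMod 2)) (Multiplicative (ZMod m)) →*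
      SL(2, S) ⧸ Subgroup.center SL(2, S)} {A B : SL(2, S)}
    (hl : θ (.inl (.ofAdd 1)) = QuotientGroup.mk' _ A)
    (hr : θ (.inr (.ofAdd 1)) = QuotientGroup.mk' _ B) (hA : A.1.trace = 0)
    (hB : B.1.trace = f (2 * τ)) (hAB : (A.1 * B.1).trace = f (2 * x))
    (h : X ^ 2 - C (2 * τ) * X + 1 ∣ X ^ m - C ε) :
    ∃ (Θ : Monoid.Coprod (Multiplicative (ZMod 2)) (Multiplicative (ZMod m)) →*
        unitary (TraceAlgebra τ x) ⧸ unitaryIn (⊥ : Subalgebra R (TraceAlgebra τ x)))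
      (σ : unitary (TraceAlgebra τ x) →* SL(2, S)),
      Θ (.inl (.ofAdd 1)) = QuotientGroup.mk' _ (TraceAlgebra.left τ x) ∧
      Θ (.inr (.ofAdd 1)) = QuotientGroup.mk' _ (TraceAlgebra.right τ x) ∧
      (∀ g u, Θ g = QuotientGroup.mk' _ u → θ g = QuotientGroup.mk' _ (σ u)) ∧
      (∀ u, (σ u).1.trace = f (2 * u.1.re)) ∧
      ∀ u v, ((σ u).1 * (σ v).1 - (σ v).1 * (σ u).1).det =
        f (reducedNorm (u.1 * v.1 - v.1 * u.1)) := by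
  obtain ⟨Θ, hΘl, hΘr⟩ := exists_coprod_hom_traceAlgebra x h
  obtain ⟨σ, hσA, hσB, hσc, hσtr, hσdet⟩ := exists_unitary_hom_of_ringHom f hA hB hAB
  have hfactor : θ = (QuotientGroup.map _ _ σ hσc).comp Θ := by
    refine MonoidHom.eq_of_eqOn_dense closure_coprod_generators ?_
    rintro _ (rfl | rfl)
    · rw [hl, MonoidHom.comp_apply, hΘl, ← hσA]
      rfl
    · rw [hr, MonoidHom.comp_apply, hΘr, ← hσB]
      rfl
  refine ⟨Θ, σ, hΘl, hΘr, fun g u hu ↦ ?_, hσtr, hσdet⟩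
  rw [hfactor, MonoidHom.comp_apply, hu]
  rfl

lemma exists_homogeneous_generic_pair [IsDomain R] {S : Type*} [CommRing S] {f : R →+* S} {x : R}
    (hx : f x = 0) (hτ : 4 * (τ ^ 2 + x ^ 2 - 1) ≠ 0)
    {Θ : Monoid.Coprod (Multiplicative (ZMod 2)) (Multiplicative (ZMod m)) →*
      unitary (TraceAlgebra τ x) ⧸ unitaryIn (⊥ : Subalgebra R (TraceAlgebra τ x))}
    (hl : Θ (.inl (.ofAdd 1)) = QuotientGroup.mk' _ (TraceAlgebra.left τ x))
    (hr : Θ (.inr (.ofAdd 1)) = QuotientGroup.mk' _ (TraceAlgebra.right τ x))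
    {g₁ g₂ : Monoid.Coprod (Multiplicative (ZMod 2)) (Multiplicative (ZMod m))}
    (hg : Subgroup.closure {g₁, g₂} = ⊤) :
    ∃ u ∈ homogeneousUnitary f, ∃ v ∈ homogeneousUnitary f,
      Θ g₁ = QuotientGroup.mk' _ u ∧ Θ g₂ = QuotientGroup.mk' _ v ∧
        IsUnit (commutatorIndex u.1 v.1) := by
  have hhom (g) : Θ g ∈ (homogeneousUnitary f).map (QuotientGroup.mk' _) := by
    refine coprod_hom_mem ?_ ?_ g
    · exact hl ▸ Subgroup.mem_map_of_mem _ (TraceAlgebra.left_mem_homogeneousUnitary τ x f)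
    · exact hr ▸ Subgroup.mem_map_of_mem _ (TraceAlgebra.right_mem_homogeneousUnitary τ x hx)
  obtain ⟨u, hu, hgu⟩ := hhom g₁
  obtain ⟨v, hv, hgv⟩ := hhom g₂
  have hmem (g) : Θ g ∈ Subgroup.closure {QuotientGroup.mk' _ u, QuotientGroup.mk' _ v} := by
    rw [hgu, hgv, ← Set.image_pair, ← MonoidHom.map_closure, hg]
    exact Subgroup.mem_map_of_mem _ trivial
  exact ⟨u, hu, v, hv, hgu.symm, hgv.symm, TraceAlgebra.isUnit_commutatorIndex hτ
    (mem_adjoin_of_mk_mem_closure (hl ▸ hmem _)) (mem_adjoin_of_mk_mem_closure (hr ▸ hmem _))⟩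

end GenericPair

section NonLifting

variable {F : Type*} [Field F] {m : ℕ}

lemma eval_re_eq_zero_or (hsq : ¬ IsSquare (-1 : F)) {τ w : F}
    {u v : unitary (TraceAlgebra (C τ) (X : F[X]))}
    (hu : u ∈ homogeneousUnitary (evalRingHom 0)) (hv : v ∈ homogeneousUnitary (evalRingHom 0))
    (hunit : IsUnit (commutatorIndex u.1 v.1))
    (hw : eval w (reducedNorm (u.1 * v.1 - v.1 * u.1)) = 4) :
    eval w u.1.re = 0 ∨ eval w v.1.re = 0 := by
  have h2 := two_ne_zero_of_not_isSquare_neg_one hsq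
  obtain ⟨e, -, he⟩ := Polynomial.isUnit_iff.1 hunit
  have hwe : (τ ^ 2 + w ^ 2 - 1) * e = -1 := by
    rw [reducedNorm_mul_sub_mul, ← he] at hw
    simp only [eval_mul, eval_sub, eval_add, eval_neg, eval_pow, eval_X, eval_C, eval_one,
      eval_ofNat] at hw
    refine mul_left_cancel₀ (mul_ne_zero h2 h2) ?_
    linear_combination -hw
  obtain h0 | ⟨htr, a, d, had, hnorm⟩ := map_commutatorIndex_of_mem_homogeneousUnitary hu hv
  · rw [← he, coe_evalRingHom, eval_C] at h0
    simp [h0] at hwe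
  · rw [← he, coe_evalRingHom, eval_C] at had
    simp only [coe_evalRingHom, eval_sub, eval_add, eval_pow, eval_C, eval_X, eval_one] at hnorm
    have hsum : a ^ 2 + (w * d) ^ 2 = 0 := by
      linear_combination hnorm + hwe - (τ ^ 2 + w ^ 2 - 1) * had
    have hd : d ≠ 0 := by
      rintro rfl
      simp [had] at hwe
    have hwd : w * d = 0 := by
      by_contra h
      refine hsq ⟨a / (w * d), ?_⟩
      rw [div_mul_div_comm, eq_div_iff (mul_ne_zero h h)]
      linear_combination -hsum
    obtain rfl := (mul_eq_zero.1 hwd).resolve_right hd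
    exact htr

lemma exists_lift_generators
    {θ : Monoid.Coprod (Multiplicative (ZMod 2)) (Multiplicative (ZMod m)) →*
      SL(2, F) ⧸ Subgroup.center SL(2, F)} (hθ : Function.Surjective θ) :
    ∃ (A B : SL(2, F)) (r : F), θ (.inl (.ofAdd 1)) = QuotientGroup.mk' _ A ∧
      θ (.inr (.ofAdd 1)) = QuotientGroup.mk' _ B ∧ A.1.trace = 0 ∧
      X ^ 2 - C B.1.trace * X + 1 ∣ X ^ m - C r := by
  obtain ⟨A, hA⟩ := QuotientGroup.mk'_surjective _ (θ (.inl (.ofAdd 1)))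
  obtain ⟨B, hB⟩ := QuotientGroup.mk'_surjective _ (θ (.inr (.ofAdd 1)))
  have hgen := closure_pair_map_eq_top hθ closure_coprod_generators
  rw [← hA, ← hB] at hgen
  have hnc : ¬ ∀ x y : SL(2, F), x * y = y * x := fun h ↦ by
    let U : SL(2, F) := ⟨!![1, 1; 0, 1], by simp⟩
    let V : SL(2, F) := ⟨!![1, 0; 1, 1], by simp⟩
    have hUV := congrFun₂ (congrArg Subtype.val (h U V)) 0 0
    rw [Matrix.SpecialLinearGroup.coe_mul, Matrix.SpecialLinearGroup.coe_mul] at hUV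
    simp [U, V] at hUV
  have hAc : A ∉ Subgroup.center SL(2, F) := fun h ↦ hnc (commute_of_left_mem_center hgen h)
  have hBc : B ∉ Subgroup.center SL(2, F) := fun h ↦
    hnc (commute_of_left_mem_center (Set.pair_comm _ _ ▸ hgen) h)
  have hpow (n : ℕ) : (.ofAdd 1 : Multiplicative (ZMod n)) ^ n = 1 := by
    simp [← ofAdd_nsmul]
  obtain ⟨r, hr⟩ := (mk_pow_eq_one_iff (A := A) (n := 2)).1 <| by
    rw [hA, ← map_pow, ← map_pow, hpow, map_one, map_one]
  obtain ⟨s, hs⟩ := (mk_pow_eq_one_iff (A := B) (n := m)).1 <| by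
    rw [hB, ← map_pow, ← map_pow, hpow, map_one, map_one]
  exact ⟨A, B, s, hA.symm, hB.symm, trace_eq_zero_of_sq_eq_algebraMap hAc hr,
    quadratic_dvd_of_pow_eq_algebraMap hBc hs⟩

lemma trace_eq_zero_or_of_det_commutator_eq_four (hsq : ¬ IsSquare (-1 : F))
    {θ : Monoid.Coprod (Multiplicative (ZMod 2)) (Multiplicative (ZMod m)) →*
      SL(2, F) ⧸ Subgroup.center SL(2, F)} (hθ : Function.Surjective θ)
    {g₁ g₂ : Monoid.Coprod (Multiplicative (ZMod 2)) (Multiplicative (ZMod m))}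
    (hg : Subgroup.closure {g₁, g₂} = ⊤) {A B : SL(2, F)} (h₁ : θ g₁ = QuotientGroup.mk' _ A)
    (h₂ : θ g₂ = QuotientGroup.mk' _ B) (hdet : (A.1 * B.1 - B.1 * A.1).det = 4) :
    A.1.trace = 0 ∨ B.1.trace = 0 := by
  have h2 := two_ne_zero_of_not_isSquare_neg_one hsq
  obtain ⟨A₀, B₀, ε, hl, hr, hA₀, hB₀⟩ := exists_lift_generators hθ
  obtain ⟨τ, hτ⟩ : ∃ τ, B₀.1.trace = 2 * τ := ⟨_, (mul_div_cancel₀ _ h2).symm⟩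
  obtain ⟨w, hw⟩ : ∃ w, (A₀.1 * B₀.1).trace = 2 * w := ⟨_, (mul_div_cancel₀ _ h2).symm⟩
  have hdvd : X ^ 2 - C (2 * C τ) * X + 1 ∣ (X ^ m - C (C ε) : F[X][X]) := by
    simpa [hτ, ← C_ofNat] using Polynomial.map_dvd (C : F →+* F[X]) hB₀
  obtain ⟨Θ, σ, hΘl, hΘr, hσ, hσtr, hσdet⟩ := exists_factorization_through_traceAlgebra
    (x := X) (evalRingHom w) hl hr hA₀ (by simp [hτ]) (by simp [hw]) hdvd
  have hne : 4 * ((C τ) ^ 2 + X ^ 2 - 1 : F[X]) ≠ 0 := fun h ↦ by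
    have h4 : (4 : F) = 0 := by simpa [← C_pow, coeff_one, -map_pow] using congrArg (coeff · 2) h
    exact mul_ne_zero h2 h2 (by linear_combination h4)
  obtain ⟨u, hu, v, hv, hgu, hgv, hunit⟩ := exists_homogeneous_generic_pair
    (f := evalRingHom (0 : F)) (by simp) hne hΘl hΘr hg
  obtain ⟨r, hr, hru⟩ := exists_eq_smul_of_mk_eq ((hσ g₁ u hgu).symm.trans h₁)
  obtain ⟨s, hs, hsv⟩ := exists_eq_smul_of_mk_eq ((hσ g₂ v hgv).symm.trans h₂)
  have hnorm : eval w (reducedNorm (u.1 * v.1 - v.1 * u.1)) = 4 := by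
    rw [← hdet, hru, hsv, det_smul_mul_sub_mul hr hs, hσdet, coe_evalRingHom]
  refine (eval_re_eq_zero_or hsq hu hv hunit hnorm).imp (fun h ↦ ?_) fun h ↦ ?_
  · rw [hru, trace_smul, hσtr, map_mul, coe_evalRingHom, h, mul_zero, smul_zero]
  · rw [hsv, trace_smul, hσtr, map_mul, coe_evalRingHom, h, mul_zero, smul_zero]

lemma map_pair_ne_of_det_commutator_eq_four (hsq : ¬ IsSquare (-1 : F)) {A B : SL(2, F)}
    (hgen : Subgroup.closure {A, B} = ⊤) (hdet : (A.1 * B.1 - B.1 * A.1).det = 4)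
    (hA : A.1.trace ≠ 0) (hB : B.1.trace ≠ 0)
    (θ : Monoid.Coprod (Multiplicative (ZMod 2)) (Multiplicative (ZMod m)) →*
      SL(2, F) ⧸ Subgroup.center SL(2, F))
    {g₁ g₂ : Monoid.Coprod (Multiplicative (ZMod 2)) (Multiplicative (ZMod m))}
    (hg : Subgroup.closure {g₁, g₂} = ⊤) :
    (θ g₁, θ g₂) ≠ (QuotientGroup.mk' _ A, QuotientGroup.mk' _ B) := by
  intro h
  obtain ⟨h₁, h₂⟩ := Prod.mk.inj h
  have hθ : Function.Surjective θ := by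
    refine surjective_of_closure_eq_top (x := g₁) (y := g₂) ?_
    rw [h₁, h₂]
    exact closure_pair_map_eq_top (QuotientGroup.mk'_surjective _) hgen
  exact (trace_eq_zero_or_of_det_commutator_eq_four hsq hθ hg h₁ h₂ hdet).elim hA hB

end NonLifting

section FieldOrder

lemma eq_one_or_sixteen_le_of_prime_pow_mod_four {p k : ℕ} (hp : p.Prime)
    (h : p ^ k % 4 = 3) : k = 1 ∨ 16 ≤ p ^ k := by
  obtain ⟨n, rfl⟩ : Odd k := by
    by_contra hk
    obtain ⟨n, rfl⟩ := Nat.not_odd_iff_even.1 hk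
    have := Nat.mul_mod (p ^ n) (p ^ n) 4
    have hn : p ^ n % 4 < 4 := Nat.mod_lt _ (by norm_num)
    rw [← pow_add, h] at this
    interval_cases p ^ n % 4 <;> simp at this
  obtain rfl | hn := n.eq_zero_or_pos
  · exact .inl rfl
  · have hp2 : p ≠ 2 := by
      rintro rfl
      rw [pow_succ] at h
      omega
    have hp3 : 3 ≤ p := lt_of_le_of_ne hp.two_le hp2.symm
    right
    calc 16 ≤ 3 ^ 3 := by norm_num
      _ ≤ p ^ 3 := Nat.pow_le_pow_left hp3 3
      _ ≤ p ^ (2 * n + 1) := Nat.pow_le_pow_right hp.pos (by omega)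

lemma prime_and_three_ne_zero_or_sixteen_le_card {F : Type*} [Field F] [Fintype F] {p k : ℕ}
    (hp : p.Prime) (hcard : Fintype.card F = p ^ k) (h4 : p ^ k % 4 = 3) (h3 : p ^ k ≠ 3) :
    ((Fintype.card F).Prime ∧ (3 : F) ≠ 0) ∨ 16 ≤ Fintype.card F := by
  have := Fact.mk hp
  have := charP_of_card_eq_prime_pow hcard
  rw [hcard]
  refine (eq_one_or_sixteen_le_of_prime_pow_mod_four hp h4).imp_left ?_
  rintro rfl
  rw [pow_one] at h3 ⊢
  refine ⟨hp, fun h ↦ h3 ((Nat.prime_dvd_prime_iff_eq hp Nat.prime_three).1 ?_)⟩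
  exact (CharP.cast_eq_zero_iff F p 3).1 (mod_cast h)

end FieldOrder

/-- for `G = C_2 ∗ C_m` and `H = PSL(2,q)` where `q = p^k ≡ 3 (mod 4)`,
`q ≠ 3`, and `p ∣ m` or `gcd(m,(q+1)/2) ≥ 3` or `gcd(m,(q-1)/2) ≥ 3`, the group `H`
is a homomorphic image of `G`, and some generating pair of `H` does not lift to a
generating pair of `G` along any homomorphism `G → H`. -/
theorem stmt2 (m p k : ℕ) (hm : 0 < m) (hp : p.Prime)
    (F : Type) [Field F] [Fintype F] (hcard : Fintype.card F = p ^ k)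
    (hq3mod4 : p ^ k % 4 = 3) (hq3 : p ^ k ≠ 3)
    (hcond : p ∣ m ∨ 3 ≤ Nat.gcd m ((p ^ k + 1) / 2) ∨ 3 ≤ Nat.gcd m ((p ^ k - 1) / 2)) :
    (∃ φ : Monoid.Coprod (Cyc 2) (Cyc m) →* PSL2 F, Function.Surjective φ) ∧
    ∃ h1 h2 : PSL2 F, Subgroup.closure {h1, h2} = ⊤ ∧
      ∀ (θ : Monoid.Coprod (Cyc 2) (Cyc m) →* PSL2 F)
        (g1 g2 : Monoid.Coprod (Cyc 2) (Cyc m)),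
        Subgroup.closure {g1, g2} = ⊤ → (θ g1, θ g2) ≠ (h1, h2) := by
  have := Fact.mk hp
  have := charP_of_card_eq_prime_pow hcard
  have hcases := prime_and_three_ne_zero_or_sixteen_le_card hp hcard hq3mod4 hq3
  rw [← hcard] at hq3mod4 hcond
  have hsq : ¬ IsSquare (-1 : F) := fun h ↦ FiniteField.isSquare_neg_one_iff.1 h hq3mod4
  have h2 := two_ne_zero_of_not_isSquare_neg_one hsq
  obtain ⟨y, ε, hy, hdvd⟩ :=
    exists_quadratic_dvd_X_pow_sub_C h2 (Nat.odd_iff.2 (by omega)) hcond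
  obtain ⟨A, B, hAB, hA, hB⟩ :
      ∃ A B : SL2 F, Subgroup.closure {A, B} = ⊤ ∧ A.1.trace = 0 ∧ B.1.trace = y :=
    hcases.elim (fun h ↦ exists_pair_trace_eq_zero_of_card_prime h.1 hy)
      fun h ↦ exists_pair_trace_eq_zero_of_card_ge h hsq hy
  obtain ⟨M, N, hMN, hdet, hM, hN⟩ :
      ∃ M N : SL2 F, Subgroup.closure {M, N} = ⊤ ∧ (M.1 * N.1 - N.1 * M.1).det = 4 ∧
        M.1.trace ≠ 0 ∧ N.1.trace ≠ 0 :=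
    hcases.elim (fun h ↦ exists_pair_det_commutator_eq_four_of_card_prime h.1 h2 h.2)
      fun h ↦ exists_pair_det_commutator_eq_four_of_card_ge h hsq
  refine ⟨exists_surjective_coprod_hom_of_trace hAB hA (hB ▸ hdvd), QuotientGroup.mk' _ M,
    QuotientGroup.mk' _ N, closure_pair_map_eq_top (QuotientGroup.mk'_surjective _) hMN,
    fun θ g₁ g₂ hg ↦ map_pair_ne_of_det_commutator_eq_four hsq hMN hdet hM hN θ hg⟩
end
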